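/- arXiv:2406.16599 — 2 statements merged into one kernel-verified Lean document; each statement's English description precedes it below -/
import Mathlib

section
/- Let K be a field, A = K[x_1, ..., x_n], p ∈ K[x_1] an irreducible polynomial, s_1 ≤ ... ≤ s_k ≤ s nonnegative integers, U ∈ GL_l(A), and let B = diag(p^{s_1}, ..., p^{s_k}, p^s, ..., p^s) · U · diag(1, ..., 1, p, ..., p) ∈ A^{l×l}, where the second diagonal matrix has exactly k entries equal to 1 and l − k entries equal to p. If for each i = 1, ..., k the gcd of all i × i minors of B is (an associate of) p^{s_1 + ... + s_i} and the i × i reduced minors of B generate the unit ideal A (i.e. J_i(B) = A), then B is equivalent to diag(p^{s_1}, ..., p^{s_k}, p^{s+1}, ..., p^{s+1}). -/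
/-- Two `l × m` matrices over a commutative ring are equivalent if they differ by
left/right multiplication by square matrices with unit determinant. -/
def MatrixEquiv {B : Type*} [CommRing B] {l m : ℕ}
    (F G : Matrix (Fin l) (Fin m) B) : Prop :=
  ∃ (U : Matrix (Fin l) (Fin l) B) (V : Matrix (Fin m) (Fin m) B),
    IsUnit U.det ∧ IsUnit V.det ∧ F = U * G * V

/-- The set of all `i × i` minors of a matrix. -/
def minorsSet {R : Type*} [CommRing R] {l m : ℕ} (i : ℕ)
    (F : Matrix (Fin l) (Fin m) R) : Set R :=
  {a | ∃ (f : Fin i → Fin l) (g : Fin i → Fin m),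
      StrictMono f ∧ StrictMono g ∧ a = (F.submatrix f g).det}

/-- `d` is a greatest common divisor of the set `s`. -/
def IsGcdOf {R : Type*} [CommRing R] (d : R) (s : Set R) : Prop :=
  (∀ a ∈ s, d ∣ a) ∧ ∀ c : R, (∀ a ∈ s, c ∣ a) → c ∣ d

/-- The image of a univariate polynomial `p ∈ K[x₁]` in `A = K[x₁, …, x_{n+1}]`,
sending the variable to `x₁` (the variable of index `0`). -/
noncomputable def polyImage {K : Type*} [CommRing K] (n : ℕ) (p : Polynomial K) :
    MvPolynomial (Fin (n + 1)) K :=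
  Polynomial.aeval (MvPolynomial.X 0) p

/-!
Let `q` be the image of `p` and `r` the number of exponents below `s`. A minor of size `r` of `B`
using rows other than the first `r` is divisible by one more power of `q`, and `q` itself lies in
the ideal of all `t` such that `t • 1` is a right multiple of the first `r` rows of
`U * diag(1, …, 1, q, …, q)`. Hence `J_r(B) = A` says that the first `r` rows of `U` have a right
inverse whose rows of index at least `k` are divisible by `q`. A relative form of the
Quillen–Suslin theorem, with `GL` replaced by the invertible matrices that are block upper
triangular modulo `q`, then provides such a matrix `F` for which the first `r` rows of `U * F` are
those of the identity. As the exponents are constant from row `r` on,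
`diag(p^a) * U * F = E * diag(p^a)` and `F⁻¹ * diag(1, q) = diag(1, q) * G` with `E` and `G`
invertible.

The relative theorem holds over `R[x₁, …, xₙ]` for every principal ideal domain `R` and `q ∈ R`
(here `R = K[x₁]`), by induction on `n`: the localization `R⟨X⟩` of `R[X]` at the monic polynomials
is again a principal ideal domain, so a completion exists over `R⟨X⟩[x₂, …, xₙ]`. To descend it to
polynomials over a local ring (Horrocks), one shows by Nakayama's lemma that every row over `R⟨X⟩`
is a polynomial row plus a row of proper fractions times the given matrix; this corrects the matrix
to a polynomial one by a factor `1 - N` with `N` small. Quillen patching passes from local rings to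
the global case.
-/

open Matrix

section RelativeRows

variable {A A' m n : Type*} [CommRing A] [CommRing A'] {q : A} {S : Set n}

lemma blockTriangular_map_mk_span_singleton_iff {G : Matrix n n A} :
    (G.map (Ideal.Quotient.mk (Ideal.span {q}))).BlockTriangular (· ∉ S) ↔
      ∀ i ∉ S, ∀ j ∈ S, q ∣ G i j := by
  have hlt (i j : n) : (j ∉ S) < (i ∉ S) ↔ i ∉ S ∧ j ∈ S := by
    rw [lt_iff_le_not_ge]
    simp only [le_Prop_eq]
    tauto
  simp only [BlockTriangular, hlt, map_apply, Ideal.Quotient.eq_zero_iff_mem,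
    Ideal.mem_span_singleton]
  exact ⟨fun h i hi j hj => h ⟨hi, hj⟩, fun h i j hij => h i hij.1 j hij.2⟩

variable [Fintype m] [Fintype n]

/-- Rows that remain unimodular after the entries outside `S` are multiplied by `q`. -/
def RelUnimodular (q : A) (S : Set n) (u : n → A) : Prop :=
  ∃ v : n → A, (∀ j ∉ S, q ∣ v j) ∧ u ⬝ᵥ v = 1

namespace RelUnimodular

lemma map {u : n → A} (hu : RelUnimodular q S u) (f : A →+* A') :
    RelUnimodular (f q) S (f ∘ u) := by
  obtain ⟨v, hv, huv⟩ := hu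
  refine ⟨f ∘ v, fun j hj => map_dvd f (hv j hj), ?_⟩
  rw [← RingHom.map_dotProduct, huv, map_one]

lemma comp_equiv {u : n → A} (hu : RelUnimodular q S u) (e : m ≃ n) :
    RelUnimodular q (e ⁻¹' S) (u ∘ e) := by
  obtain ⟨v, hv, huv⟩ := hu
  exact ⟨v ∘ e, fun j hj => hv (e j) hj, by rw [comp_equiv_dotProduct_comp_equiv, huv]⟩

end RelUnimodular

variable [DecidableEq m] [DecidableEq n]

/-- Invertible matrices whose reduction modulo `q` is block upper triangular for the partition of
the indices into `S` and its complement. -/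
structure IsRelParabolic (q : A) (S : Set n) (G : Matrix n n A) : Prop where
  isUnit_det : IsUnit G.det
  dvd : ∀ i ∉ S, ∀ j ∈ S, q ∣ G i j

namespace IsRelParabolic

lemma one : IsRelParabolic q S 1 where
  isUnit_det := by simp
  dvd i hi j hj := by simp [one_apply_ne (show i ≠ j from fun hij => hi (hij ▸ hj))]

lemma map {G : Matrix n n A} (hG : IsRelParabolic q S G) (f : A →+* A') :
    IsRelParabolic (f q) S (G.map f) where
  isUnit_det := by
    have := hG.isUnit_det.map f
    rwa [RingHom.map_det] at this
  dvd i hi j hj := map_dvd f (hG.dvd i hi j hj)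

lemma submatrix {G : Matrix n n A} (hG : IsRelParabolic q S G) (e : m ≃ n) :
    IsRelParabolic q (e ⁻¹' S) (G.submatrix e e) where
  isUnit_det := by rw [det_submatrix_equiv_self]; exact hG.isUnit_det
  dvd i hi j hj := hG.dvd (e i) hi (e j) hj

lemma mul {G H : Matrix n n A} (hG : IsRelParabolic q S G) (hH : IsRelParabolic q S H) :
    IsRelParabolic q S (G * H) where
  isUnit_det := by rw [det_mul]; exact hG.isUnit_det.mul hH.isUnit_det
  dvd := by
    rw [← blockTriangular_map_mk_span_singleton_iff, Matrix.map_mul]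
    exact (blockTriangular_map_mk_span_singleton_iff.2 hG.dvd).mul
      (blockTriangular_map_mk_span_singleton_iff.2 hH.dvd)

lemma inv {G : Matrix n n A} (hG : IsRelParabolic q S G) : IsRelParabolic q S G⁻¹ where
  isUnit_det := isUnit_nonsing_inv_det G hG.isUnit_det
  dvd := by
    let π := Ideal.Quotient.mk (Ideal.span {q})
    have hinv : G.map π * G⁻¹.map π = 1 := by
      rw [← Matrix.map_mul, mul_nonsing_inv _ hG.isUnit_det, Matrix.map_one _ π.map_zero π.map_one]
    have : Invertible (G.map π) := invertibleOfRightInverse _ _ hinv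
    rw [← blockTriangular_map_mk_span_singleton_iff, ← inv_eq_right_inv hinv]
    exact blockTriangular_inv_of_blockTriangular
      (blockTriangular_map_mk_span_singleton_iff.2 hG.dvd)

end IsRelParabolic

/-- Rows that occur with index `i₀` in a matrix satisfying `IsRelParabolic q S`. -/
def Completable (q : A) (S : Set n) (i₀ : n) (u : n → A) : Prop :=
  ∃ G : Matrix n n A, IsRelParabolic q S G ∧ G i₀ = u

namespace Completable

lemma map {i₀ : n} {u : n → A} (hu : Completable q S i₀ u) (f : A →+* A') :
    Completable (f q) S i₀ (f ∘ u) := by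
  obtain ⟨G, hG, rfl⟩ := hu
  exact ⟨G.map f, hG.map f, rfl⟩

lemma vecMul {i₀ : n} {u : n → A} (hu : Completable q S i₀ u) {G : Matrix n n A}
    (hG : IsRelParabolic q S G) : Completable q S i₀ (u ᵥ* G) := by
  obtain ⟨H, hH, rfl⟩ := hu
  exact ⟨H * G, hH.mul hG, by ext; rfl⟩

lemma comp_equiv {e : m ≃ n} {i₀ : m} {u : n → A} (hu : Completable q S (e i₀) u) :
    Completable q (e ⁻¹' S) i₀ (u ∘ e) := by
  obtain ⟨G, hG, rfl⟩ := hu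
  exact ⟨G.submatrix e e, hG.submatrix e, rfl⟩

end Completable

lemma completable_iff_of_isUnit (hq : IsUnit q) {i₀ : n} {u : n → A} :
    Completable q S i₀ u ↔ ∃ G : Matrix n n A, IsUnit G.det ∧ G i₀ = u :=
  ⟨fun ⟨G, hG, hu⟩ => ⟨G, hG.isUnit_det, hu⟩,
    fun ⟨G, hG, hu⟩ => ⟨G, ⟨hG, fun _ _ _ _ => hq.dvd⟩, hu⟩⟩

lemma completable_univ_iff {i₀ : n} {u : n → A} :
    Completable q Set.univ i₀ u ↔ ∃ G : Matrix n n A, IsUnit G.det ∧ G i₀ = u :=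
  ⟨fun ⟨G, hG, hu⟩ => ⟨G, hG.isUnit_det, hu⟩,
    fun ⟨G, hG, hu⟩ => ⟨G, ⟨hG, fun _ hi => (hi trivial).elim⟩, hu⟩⟩

lemma completable_comp_equiv {e : m ≃ n} {i₀ : m} {u : n → A} :
    Completable q (e ⁻¹' S) i₀ (u ∘ e) ↔ Completable q S (e i₀) u := by
  refine ⟨fun hu => ?_, Completable.comp_equiv⟩
  rw [← e.symm_apply_apply i₀] at hu
  simpa [← Set.preimage_comp, Function.comp_assoc] using hu.comp_equiv

end RelativeRows

lemma preimage_sumCompl {n : Type*} (S : Set n) [DecidablePred (· ∈ S)] :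
    Equiv.Set.sumCompl S ⁻¹' S = Set.range Sum.inl := by
  ext (i | i)
  · simp
  · simpa using Set.notMem_of_mem_compl i.2

section PrincipalIdealRing

variable {R ι κ : Type*} [CommRing R] [IsDomain R] [IsPrincipalIdealRing R] [Fintype ι]
  [DecidableEq ι]

lemma exists_isUnit_det_eq_smul_row (i₀ : ι) (a : ι → R) :
    ∃ (G : Matrix ι ι R) (g : R), IsUnit G.det ∧ a = g • G i₀ := by
  by_cases ha : a = 0
  · exact ⟨1, 0, by simp, by simp [ha]⟩
  obtain ⟨n, snf⟩ := Submodule.smithNormalForm (Pi.basisFun R ι) (Submodule.span R {a})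
  obtain rfl : n = 1 := by
    have hcard := Module.finrank_eq_card_basis snf.bN
    rw [← (LinearEquiv.toSpanNonzeroSingleton R (ι → R) a ha).finrank_eq] at hcard
    simpa using hcard.symm
  let b := snf.bM.reindex (Equiv.swap (snf.f 0) i₀)
  have ham : a ∈ Submodule.span R {a} := Submodule.mem_span_singleton_self a
  refine ⟨((Pi.basisFun R ι).toMatrix b)ᵀ, snf.bN.repr ⟨a, ham⟩ 0 * snf.a 0, ?_, ?_⟩
  · rw [det_transpose]
    exact isUnit_det_of_right_inverse ((Pi.basisFun R ι).toMatrix_mul_toMatrix_flip b)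
  · have hrow : ((Pi.basisFun R ι).toMatrix b)ᵀ i₀ = snf.bM (snf.f 0) := by
      ext j
      simp [Module.Basis.toMatrix, b]
    have hsum := congrArg Subtype.val (snf.bN.sum_repr ⟨a, ham⟩)
    simp only [Finset.univ_unique, Fin.default_eq_zero, Finset.sum_singleton, Submodule.coe_smul,
      snf.snf] at hsum
    rw [mul_smul, hrow]
    exact hsum.symm

lemma exists_isUnit_det_row_eq (i₀ : ι) {a v : ι → R} (h : a ⬝ᵥ v = 1) :
    ∃ G : Matrix ι ι R, IsUnit G.det ∧ G i₀ = a := by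
  obtain ⟨G, g, hG, rfl⟩ := exists_isUnit_det_eq_smul_row i₀ a
  have hg : IsUnit g := by
    rw [smul_dotProduct, smul_eq_mul] at h
    exact IsUnit.of_mul_eq_one _ h
  refine ⟨G.updateRow i₀ (g • G i₀), ?_, updateRow_self⟩
  rw [det_updateRow_smul, updateRow_eq_self]
  exact hg.mul hG

lemma completable_single_add_single {A n : Type*} [CommRing A] [Fintype n] [DecidableEq n]
    {S : Set n} {i₀ j₀ : n} (hi : i₀ ∈ S) (hj : j₀ ∉ S) {q g h s t : A}
    (hst : g * s + h * (q * t) = 1) :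
    Completable q S i₀ (Pi.single i₀ g + Pi.single j₀ h) := by
  have hne : i₀ ≠ j₀ := fun hij => hj (hij ▸ hi)
  let X : Matrix n (Fin 2) A :=
    of fun i => ![(Pi.single i₀ 1 : n → A) i, (Pi.single j₀ 1 : n → A) i]
  let Y : Matrix (Fin 2) n A :=
    of ![Pi.single i₀ (g - 1) + Pi.single j₀ h, Pi.single i₀ (-(q * t)) + Pi.single j₀ (s - 1)]
  refine ⟨1 + X * Y, ⟨?_, fun i hi' j hj' => ?_⟩, ?_⟩
  · have hYX : 1 + Y * X = !![g, h; -(q * t), s] := by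
      ext i j
      simp only [X, Y, Matrix.add_apply, Matrix.mul_apply, of_apply]
      fin_cases i <;> fin_cases j <;> simp [Pi.single_apply, hne, hne.symm]
    rw [det_one_add_mul_comm, hYX, det_fin_two_of]
    convert isUnit_one
    linear_combination hst
  · have hij : i ≠ j := fun hij => hi' (hij ▸ hj')
    have hii : i ≠ i₀ := fun hij => hi' (hij ▸ hi)
    have hjj : j ≠ j₀ := fun hij => hj (hij ▸ hj')
    have hent : (1 + X * Y : Matrix n n A) i j =
        X i 1 * Pi.single (M := fun _ => A) i₀ (-(q * t)) j := by
      simp [X, Y, mul_apply, hij, hii, hjj]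
    rw [hent]
    refine Dvd.dvd.mul_left ?_ _
    rcases eq_or_ne j i₀ with rfl | hji
    · simp
    · simp [hji]
  · ext j
    rcases eq_or_ne j i₀ with rfl | hji
    · simp [X, Y, mul_apply, hne]
    · simp [X, Y, mul_apply, hne, hji, hji.symm]

lemma RelUnimodular.completable_of_sum_of_isPrincipalIdealRing [Fintype κ] [DecidableEq κ] {q : R}
    {u : ι ⊕ κ → R} (hu : RelUnimodular q (Set.range Sum.inl) u) (i₀ : ι) :
    Completable q (Set.range Sum.inl) (Sum.inl i₀) u := by
  obtain ⟨v, hv, huv⟩ := hu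
  rcases isEmpty_or_nonempty κ with hκ | ⟨⟨j₀⟩⟩
  · obtain ⟨G, hG, hGu⟩ := exists_isUnit_det_row_eq (Sum.inl i₀) huv
    exact ⟨G, ⟨hG, Sum.rec (fun i hi => absurd ⟨i, rfl⟩ hi) fun j => isEmptyElim j⟩, hGu⟩
  obtain ⟨G, g, hG, hg⟩ := exists_isUnit_det_eq_smul_row i₀ (u ∘ Sum.inl)
  obtain ⟨H, h, hH, hh⟩ := exists_isUnit_det_eq_smul_row j₀ (u ∘ Sum.inr)
  obtain ⟨s, t, hst⟩ : ∃ s t, g * s + h * (q * t) = 1 := by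
    choose w hw using fun j => hv (Sum.inr j) (by simp)
    refine ⟨G i₀ ⬝ᵥ (v ∘ Sum.inl), H j₀ ⬝ᵥ w, ?_⟩
    have hv : v = Sum.elim (v ∘ Sum.inl) (q • w) := by ext (j | j) <;> simp [hw]
    rw [← huv, ← Sum.elim_comp_inl_inr u, hg, hh, hv, sumElim_dotProduct_sumElim]
    simp [mul_left_comm]
  have hGH : IsRelParabolic q (Set.range Sum.inl) (fromBlocks G 0 0 H) := by
    refine ⟨?_, by rintro (i | i) <;> simp⟩
    rw [det_fromBlocks_zero₂₁]
    exact hG.mul hH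
  have hu : u = (Pi.single (Sum.inl i₀) g + Pi.single (Sum.inr j₀) h) ᵥ* fromBlocks G 0 0 H := by
    rw [← Sum.elim_comp_inl_inr u, hg, hh, add_vecMul, single_vecMul, single_vecMul]
    ext (i | i) <;> simp
  rw [hu]
  exact (completable_single_add_single (Set.mem_range_self i₀) (by simp) hst).vecMul hGH

theorem RelUnimodular.completable_of_isPrincipalIdealRing {S : Set ι} {q : R} {u : ι → R}
    (hu : RelUnimodular q S u) {i₀ : ι} (hi₀ : i₀ ∈ S) : Completable q S i₀ u := by
  classical
  change Completable q S (Equiv.Set.sumCompl S (Sum.inl ⟨i₀, hi₀⟩)) u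
  rw [← completable_comp_equiv, preimage_sumCompl]
  refine RelUnimodular.completable_of_sum_of_isPrincipalIdealRing ?_ _
  rw [← preimage_sumCompl]
  exact hu.comp_equiv _

end PrincipalIdealRing

section Monics

open Polynomial

/-- The monic polynomials; the localization at them is the ring usually written `R⟨X⟩`. -/
def monics (R : Type*) [CommRing R] : Submonoid R[X] where
  carrier := {f | f.Monic}
  one_mem' := monic_one
  mul_mem' := Monic.mul

variable {R : Type*} [CommRing R]

lemma isUnit_algebraMap_of_monic {f : R[X]} (hf : f.Monic) :
    IsUnit (algebraMap R[X] (Localization (monics R)) f) :=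
  IsLocalization.map_units _ (⟨f, hf⟩ : monics R)

lemma exists_monic_mul_eq (t : Localization (monics R)) :
    ∃ f g : R[X], f.Monic ∧ t * algebraMap R[X] _ f = algebraMap R[X] _ g := by
  obtain ⟨⟨g, f⟩, h⟩ := IsLocalization.surj (monics R) t
  exact ⟨f, g, f.2, h⟩

lemma mem_map_C_iff_map_eq_zero {R' : Type*} [CommRing R'] {π : R →+* R'} {f : R[X]} :
    f ∈ (RingHom.ker π).map C ↔ f.map π = 0 := by
  simp [Ideal.mem_map_C_iff, Polynomial.ext_iff]

lemma exists_monic_map_eq_mul_C_inv {k : Type*} [Field k] {π : R →+* k}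
    (hπ : Function.Surjective π) {f : k[X]} (hf : f ≠ 0) :
    ∃ g : R[X], g.Monic ∧ g.map π = f * C f.leadingCoeff⁻¹ := by
  obtain ⟨g, hg, -, hgm⟩ := lifts_and_natDegree_eq_and_monic
    ((mem_lifts _).2 (map_surjective _ hπ _)) (monic_mul_leadingCoeff_inv hf)
  exact ⟨g, hgm, hg⟩

lemma eq_map_C_comap_of_forall_not_monic {P : Ideal R[X]} (hmax : (P.comap C).IsMaximal)
    (hP : ∀ f ∈ P, ¬ f.Monic) : P = (P.comap C).map C := by
  refine le_antisymm (fun f hf => ?_) Ideal.map_comap_le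
  let : Field (R ⧸ P.comap C) := Ideal.Quotient.field _
  let π := Ideal.Quotient.mk (P.comap C)
  have hker : (RingHom.ker π).map C = (P.comap C).map C := by rw [Ideal.mk_ker]
  rw [← hker, mem_map_C_iff_map_eq_zero]
  by_contra hf0
  obtain ⟨g, hgm, hg⟩ := exists_monic_map_eq_mul_C_inv Ideal.Quotient.mk_surjective hf0
  obtain ⟨c, hc⟩ := Ideal.Quotient.mk_surjective (I := P.comap C) (f.map π).leadingCoeff⁻¹
  refine hP g ?_ hgm
  have hdiff : g - f * C c ∈ (RingHom.ker π).map C := by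
    rw [mem_map_C_iff_map_eq_zero, Polynomial.map_sub, hg, Polynomial.map_mul, map_C,
      show π c = _ from hc, sub_self]
  rw [hker] at hdiff
  simpa using P.add_mem (Ideal.map_comap_le hdiff) (P.mul_mem_right (C c) hf)

lemma monics_le_nonZeroDivisors [IsDomain R] : monics R ≤ nonZeroDivisors R[X] :=
  fun _ (hf : Monic _) => mem_nonZeroDivisors_of_ne_zero hf.ne_zero

instance [IsDomain R] : IsDomain (Localization (monics R)) :=
  IsLocalization.isDomain_localization monics_le_nonZeroDivisors

lemma exists_ne_zero_mul_add_mul_eq_C [IsDomain R] [NormalizedGCDMonoid R] {f g : R[X]}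
    (hf : Irreducible f) (hdeg : f.natDegree ≠ 0) (hfg : ¬ f ∣ g) :
    ∃ (r : R) (a b : R[X]), r ≠ 0 ∧ f * a + g * b = C r := by
  let K := FractionRing R
  have hinj : Function.Injective (algebraMap R K) := IsFractionRing.injective R K
  have hprim : f.IsPrimitive := hf.isPrimitive hdeg
  have hcop : IsCoprime (f.map (algebraMap R K)) (g.map (algebraMap R K)) :=
    ((hprim.irreducible_iff_irreducible_map_fraction_map.1 hf).coprime_iff_not_dvd).2 fun h =>
      hfg (hprim.dvd_of_fraction_map_dvd_fraction_map h)
  obtain ⟨a, b, -, -, hab⟩ := exists_mul_add_mul_eq_C_resultant f g le_rfl le_rfl (.inl hdeg)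
  refine ⟨_, a, b, fun h0 => resultant_ne_zero _ _ hcop ?_, hab⟩
  rw [resultant_map_map, natDegree_map_eq_of_injective hinj, natDegree_map_eq_of_injective hinj,
    h0, map_zero]

lemma isPrincipal_of_comap_C_eq_bot [IsDomain R] [UniqueFactorizationMonoid R] {P : Ideal R[X]}
    [P.IsPrime] (hP : P.comap C = ⊥) : P.IsPrincipal := by
  by_cases hbot : P = ⊥
  · rw [hbot]; infer_instance
  obtain ⟨f, hfP, hf⟩ := Ideal.IsPrime.exists_mem_prime_of_ne_bot ‹P.IsPrime› hbot
  have hC (r : R) (hr : C r ∈ P) : r = 0 := by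
    rwa [← Ideal.mem_comap, hP] at hr
  have hdeg : f.natDegree ≠ 0 := fun h0 => by
    obtain ⟨r, rfl⟩ := natDegree_eq_zero.1 h0
    exact hf.ne_zero (by rw [hC r hfP, C_0])
  let : NormalizedGCDMonoid R := Nonempty.some inferInstance
  refine ⟨⟨f, le_antisymm (fun g hg => ?_) ((Ideal.span_singleton_le_iff_mem _).2 hfP)⟩⟩
  rw [Ideal.submodule_span_eq, Ideal.mem_span_singleton]
  by_contra hfg
  obtain ⟨r, a, b, hr, hab⟩ := exists_ne_zero_mul_add_mul_eq_C hf.irreducible hdeg hfg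
  refine hr (hC r ?_)
  rw [← hab]
  exact P.add_mem (P.mul_mem_right _ hfP) (P.mul_mem_right _ hg)

instance [IsDomain R] [IsPrincipalIdealRing R] :
    IsPrincipalIdealRing (Localization (monics R)) := by
  refine IsPrincipalIdealRing.of_prime fun P hP => ?_
  let P' := P.comap (algebraMap R[X] (Localization (monics R)))
  have hP' : P'.IsPrime := hP.comap _
  have hmonic : ∀ f ∈ P', ¬ f.Monic := fun f hf hfm =>
    hP.ne_top (Ideal.eq_top_of_isUnit_mem _ hf (isUnit_algebraMap_of_monic hfm))
  have hprincipal : P'.IsPrincipal := by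
    by_cases hbot : P'.comap C = ⊥
    · exact isPrincipal_of_comap_C_eq_bot hbot
    · have : (P'.comap C).IsPrime := hP'.comap _
      rw [eq_map_C_comap_of_forall_not_monic (IsPrime.to_maximal_ideal hbot) hmonic]
      exact (IsPrincipalIdealRing.principal (P'.comap C)).map_ringHom C
  rw [← IsLocalization.map_under (monics R) (Localization (monics R)) P]
  exact hprincipal.map_ringHom _

end Monics

section MonicResidue

open Polynomial IsLocalRing

variable {R : Type*} [CommRing R] [IsLocalRing R]

local notation "𝒯" => Localization (monics R)

local notation "𝔪" => maximalIdeal R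

local notation "ℱ" => FractionRing (ResidueField R)[X]

/-- The homomorphism from `R⟨X⟩` to the rational functions over the residue field that extends the
reduction of polynomials modulo the maximal ideal. -/
noncomputable def monicResidue (R : Type*) [CommRing R] [IsLocalRing R] :
    Localization (monics R) →+* FractionRing (ResidueField R)[X] :=
  IsLocalization.lift (M := monics R)
    (g := (algebraMap (ResidueField R)[X] (FractionRing (ResidueField R)[X])).comp
      (mapRingHom (residue R))) fun f => by
    have hf : (f : R[X]).Monic := f.2
    refine IsUnit.mk0 _ ?_
    rw [RingHom.comp_apply, Ne, FaithfulSMul.algebraMap_eq_zero_iff]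
    exact (hf.map (residue R)).ne_zero

lemma monicResidue_algebraMap (f : R[X]) :
    monicResidue R (algebraMap R[X] 𝒯 f) =
      algebraMap (ResidueField R)[X] ℱ (f.map (residue R)) :=
  IsLocalization.lift_eq _ f

lemma exists_isUnit_monicResidue_eq_algebraMap {f : (ResidueField R)[X]} (hf : f ≠ 0) :
    ∃ t : 𝒯, IsUnit t ∧ monicResidue R t = algebraMap (ResidueField R)[X] ℱ f := by
  obtain ⟨g, hgm, hg⟩ := exists_monic_map_eq_mul_C_inv residue_surjective hf
  obtain ⟨c, hc⟩ := residue_surjective (R := R) f.leadingCoeff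
  have hlc : f.leadingCoeff ≠ 0 := leadingCoeff_ne_zero.2 hf
  have hcu : IsUnit c := (residue_ne_zero_iff_isUnit c).1 (hc ▸ hlc)
  refine ⟨algebraMap R[X] 𝒯 (C c * g), ?_, ?_⟩
  · rw [map_mul]
    exact ((hcu.map C).map _).mul (isUnit_algebraMap_of_monic hgm)
  · rw [monicResidue_algebraMap, Polynomial.map_mul, hg, map_C, hc, mul_comm, mul_assoc, ← C_mul,
      inv_mul_cancel₀ hlc, C_1, mul_one]

lemma exists_isUnit_monicResidue_eq {d : ℱ} (hd : d ≠ 0) :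
    ∃ t : 𝒯, IsUnit t ∧ monicResidue R t = d := by
  obtain ⟨f, g, hg, rfl⟩ := IsFractionRing.div_surjective (A := (ResidueField R)[X]) d
  obtain ⟨t, ht, htf⟩ := exists_isUnit_monicResidue_eq_algebraMap (f := f) (by
    rintro rfl; simp at hd)
  obtain ⟨_, ⟨s, rfl⟩, hsg⟩ := exists_isUnit_monicResidue_eq_algebraMap (nonZeroDivisors.ne_zero hg)
  refine ⟨t * ↑s⁻¹, ht.mul s⁻¹.isUnit, ?_⟩
  rw [map_mul, htf, ← hsg, div_eq_mul_inv, map_units_inv]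

lemma mem_smul_top_of_monicResidue_eq_zero {t : 𝒯} (ht : monicResidue R t = 0) :
    t ∈ (𝔪 • ⊤ : Submodule R 𝒯) := by
  obtain ⟨f, g, hf, hfg⟩ := exists_monic_mul_eq t
  have hg : g ∈ Ideal.map C 𝔪 := by
    have hres := congrArg (monicResidue R) hfg
    rw [map_mul, ht, zero_mul, monicResidue_algebraMap, eq_comm,
      FaithfulSMul.algebraMap_eq_zero_iff] at hres
    rw [← ker_residue]
    exact mem_map_C_iff_map_eq_zero.2 hres
  rw [Ideal.smul_top_eq_map, Submodule.restrictScalars_mem,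
    ← Ideal.mul_unit_mem_iff_mem _ (isUnit_algebraMap_of_monic hf), hfg,
    IsScalarTower.algebraMap_eq R R[X] 𝒯, ← Ideal.map_map]
  exact Ideal.mem_map_of_mem _ hg

end MonicResidue

section LiftMatrix

variable {T F n : Type*} [CommRing T] [Field F] [Fintype n] [DecidableEq n] {f : T →+* F}

lemma surjective_of_forall_ne_zero (hf : ∀ d ≠ 0, ∃ t, IsUnit t ∧ f t = d) :
    Function.Surjective f := fun d => by
  rcases eq_or_ne d 0 with rfl | hd
  · exact ⟨0, map_zero f⟩
  · obtain ⟨t, -, ht⟩ := hf d hd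
    exact ⟨t, ht⟩

lemma exists_isUnit_det_map_eq (hf : ∀ d ≠ 0, ∃ t, IsUnit t ∧ f t = d) (H : Matrix n n F)
    (hH : H.det ≠ 0) : ∃ H' : Matrix n n T, IsUnit H'.det ∧ H'.map f = H := by
  refine diagonal_transvection_induction_of_det_ne_zero
    (fun H => ∃ H' : Matrix n n T, IsUnit H'.det ∧ H'.map f = H) H hH ?_ ?_ ?_
  · intro D hD
    rw [det_diagonal, Finset.prod_ne_zero_iff] at hD
    choose d hd hdD using fun i => hf (D i) (hD i (Finset.mem_univ i))
    refine ⟨diagonal d, ?_, ?_⟩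
    · rw [det_diagonal]
      exact IsUnit.prod_univ_iff.2 hd
    · rw [diagonal_map (map_zero _)]
      exact congrArg diagonal (funext hdD)
  · intro t
    obtain ⟨c, hc⟩ := surjective_of_forall_ne_zero hf t.c
    refine ⟨transvection t.i t.j c, ?_, ?_⟩
    · rw [det_transvection_of_ne _ _ t.hij]
      exact isUnit_one
    · rw [transvection, Matrix.map_add _ (map_add _), Matrix.map_one _ (map_zero _) (map_one _),
        map_single, hc]
      rfl
  · rintro A B - - ⟨A', hA, rfl⟩ ⟨B', hB, rfl⟩
    exact ⟨A' * B', by rw [det_mul]; exact hA.mul hB, Matrix.map_mul⟩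

lemma exists_isUnit_det_map_eq_of_row_eq_single (hf : ∀ d ≠ 0, ∃ t, IsUnit t ∧ f t = d) {i₀ : n}
    {H : Matrix n n F} (hH : H.det ≠ 0) (hrow : H i₀ = Pi.single i₀ 1) :
    ∃ H' : Matrix n n T, IsUnit H'.det ∧ H'.map f = H ∧ H' i₀ = Pi.single i₀ 1 := by
  let e : {i // i = i₀} ⊕ {i // ¬ i = i₀} ≃ n := Equiv.sumCompl (· = i₀)
  have h12 : (H.submatrix e e).toBlocks₁₂ = 0 := by
    ext ⟨i, rfl⟩ j
    simp [toBlocks₁₂, e, hrow, j.2]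
  have h11 : (H.submatrix e e).toBlocks₁₁ = 1 := by
    ext ⟨i, rfl⟩ ⟨j, rfl⟩
    simp [toBlocks₁₁, e, hrow]
  have hdet : (H.submatrix e e).toBlocks₂₂.det ≠ 0 := by
    rwa [← det_submatrix_equiv_self e, ← fromBlocks_toBlocks (H.submatrix e e), h12,
      det_fromBlocks_zero₁₂, h11, det_one, one_mul] at hH
  obtain ⟨D, hD, hDH⟩ := exists_isUnit_det_map_eq hf _ hdet
  choose c hc using fun i j => surjective_of_forall_ne_zero hf ((H.submatrix e e).toBlocks₂₁ i j)
  refine ⟨(fromBlocks 1 0 (of c) D).submatrix e.symm e.symm, ?_, ?_, ?_⟩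
  · rw [det_submatrix_equiv_self, det_fromBlocks_zero₁₂, det_one, one_mul]
    exact hD
  · have hc' : (of c).map f = (H.submatrix e e).toBlocks₂₁ := by ext i j; exact hc i j
    rw [← submatrix_map, fromBlocks_map, hDH, Matrix.map_zero _ (map_zero _),
      Matrix.map_one _ (map_zero _) (map_one _), ← h12, ← h11, hc', fromBlocks_toBlocks]
    simp
  · ext j
    obtain ⟨j, rfl⟩ := e.surjective j
    have hi : e.symm i₀ = Sum.inl ⟨i₀, rfl⟩ := by simp [e]
    rw [submatrix_apply, hi, Equiv.symm_apply_apply]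
    rcases j with ⟨j, rfl⟩ | j
    · simp [e]
    · simp [e, j.2]

end LiftMatrix

lemma det_one_sub_sub_one_mem {S n : Type*} [CommRing S] [Fintype n] [DecidableEq n] {I : Ideal S}
    {N : Matrix n n S} (hN : ∀ i j, N i j ∈ I) : (1 - N).det - 1 ∈ I := by
  have hN0 : N.map (Ideal.Quotient.mk I) = 0 := by
    ext i j
    exact Ideal.Quotient.eq_zero_iff_mem.2 (hN i j)
  rw [← Ideal.Quotient.eq_zero_iff_mem, map_sub, map_one, RingHom.map_det, sub_eq_zero,
    RingHom.mapMatrix_apply, Matrix.map_sub _ (map_sub _),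
    Matrix.map_one _ (map_zero _) (map_one _), hN0, sub_zero, det_one]

section ProperFractions

open Polynomial IsLocalRing

variable {R : Type*} [CommRing R]

local notation "𝒯" => Localization (monics R)

lemma degree_mul_add_mul_le_of_monic {f f' g g' : R[X]} (hf : f.Monic) (hf' : f'.Monic)
    (hg : g.degree ≤ f.degree) (hg' : g'.degree ≤ f'.degree) :
    (g * f' + g' * f).degree ≤ (f * f').degree := by
  refine (degree_add_le _ _).trans (max_le ?_ ?_)
  · rw [hf'.degree_mul, hf'.degree_mul]
    gcongr
  · rw [mul_comm f, hf.degree_mul, hf.degree_mul]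
    gcongr

/-- The fractions with monic denominator whose numerator has degree at most that of the
denominator, i.e. those without pole at infinity. -/
def properFractions (R : Type*) [CommRing R] : Subalgebra R (Localization (monics R)) where
  carrier := {t | ∃ f g : R[X], f.Monic ∧ g.degree ≤ f.degree ∧
    t * algebraMap R[X] (Localization (monics R)) f = algebraMap R[X] (Localization (monics R)) g}
  mul_mem' := by
    rintro t t' ⟨f, g, hf, hg, h⟩ ⟨f', g', hf', hg', h'⟩
    refine ⟨f * f', g * g', hf.mul hf', ?_, ?_⟩
    · rw [hf'.degree_mul]
      exact (degree_mul_le _ _).trans (add_le_add hg hg')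
    · rw [map_mul, map_mul, ← h, ← h']
      ring
  add_mem' := by
    rintro t t' ⟨f, g, hf, hg, h⟩ ⟨f', g', hf', hg', h'⟩
    refine ⟨f * f', g * f' + g' * f, hf.mul hf', degree_mul_add_mul_le_of_monic hf hf' hg hg', ?_⟩
    rw [map_add, map_mul, map_mul, map_mul, ← h, ← h']
    ring
  algebraMap_mem' r := by
    refine ⟨1, C r, monic_one, ?_, ?_⟩
    · rcases subsingleton_or_nontrivial R
      · exact (congrArg degree (Subsingleton.elim _ _)).le
      · exact degree_C_le.trans degree_one.ge
    · rw [map_one, mul_one, IsScalarTower.algebraMap_apply R R[X], Polynomial.algebraMap_eq]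

local notation "ℬ" => properFractions R

lemma exists_eq_algebraMap_add (t : 𝒯) :
    ∃ (a : R[X]) (b : ℬ), t = algebraMap R[X] 𝒯 a + b := by
  nontriviality R
  obtain ⟨f, g, hf, h⟩ := exists_monic_mul_eq t
  refine ⟨g /ₘ f, ⟨t - algebraMap R[X] 𝒯 (g /ₘ f), f, g %ₘ f, hf,
    (degree_modByMonic_lt g hf).le, ?_⟩, by simp⟩
  rw [sub_mul, h, ← map_mul, ← map_sub, modByMonic_eq_sub_mul_div, mul_comm]

variable [IsLocalRing R]

local notation "𝔪" => maximalIdeal R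

/-- The proper fractions whose numerator can be chosen with coefficients in the maximal ideal. -/
def smallFractions (R : Type*) [CommRing R] [IsLocalRing R] : Ideal (properFractions R) where
  carrier := {t | ∃ f g : R[X], f.Monic ∧ g.degree ≤ f.degree ∧ g.map (residue R) = 0 ∧
    (t : Localization (monics R)) * algebraMap R[X] (Localization (monics R)) f =
      algebraMap R[X] (Localization (monics R)) g}
  zero_mem' := ⟨1, 0, monic_one, by simp, by simp, by simp⟩
  add_mem' := by
    rintro t t' ⟨f, g, hf, hg, hgm, h⟩ ⟨f', g', hf', hg', hgm', h'⟩
    refine ⟨f * f', g * f' + g' * f, hf.mul hf', degree_mul_add_mul_le_of_monic hf hf' hg hg',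
      by simp [hgm, hgm'], ?_⟩
    rw [map_add, map_mul, map_mul, map_mul, ← h, ← h', AddMemClass.coe_add]
    ring
  smul_mem' := by
    rintro t t' ⟨f', g', hf', hg', hgm', h'⟩
    obtain ⟨f, g, hf, hg, h⟩ := t.2
    refine ⟨f * f', g * g', hf.mul hf', ?_, by simp [hgm'], ?_⟩
    · rw [hf'.degree_mul]
      exact (degree_mul_le _ _).trans (add_le_add hg hg')
    · rw [map_mul, map_mul, ← h, ← h', smul_eq_mul, MulMemClass.coe_mul]
      ring

local notation "𝒥" => smallFractions R

lemma smul_mem_smallFractions {r : R} (hr : r ∈ 𝔪) (b : ℬ) : r • b ∈ 𝒥 := by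
  obtain ⟨t, f, g, hf, hg, h⟩ := b
  refine ⟨f, r • g, hf, (degree_smul_le _ _).trans hg, ?_, ?_⟩
  · rw [smul_eq_C_mul, Polynomial.map_mul, map_C, (residue_eq_zero_iff r).2 hr, C_0, zero_mul]
  · rw [SetLike.val_smul, smul_mul_assoc, h]
    exact ((IsScalarTower.toAlgHom R R[X] 𝒯).map_smul_of_tower r g).symm

lemma isUnit_of_sub_one_mem_smallFractions {b : ℬ} (hb : b - 1 ∈ 𝒥) : IsUnit (b : 𝒯) := by
  obtain ⟨f, g, hf, hg, hgm, h⟩ := hb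
  -- The numerator `f + g` of `b` is monic up to a unit, as `g` vanishes modulo `𝔪`.
  have hlead : IsUnit ((f + g).coeff f.natDegree) := by
    rw [← residue_ne_zero_iff_isUnit, ← coeff_map, Polynomial.map_add, hgm, add_zero, coeff_map,
      hf.coeff_natDegree, map_one]
    exact one_ne_zero
  obtain ⟨c, hc⟩ := hlead.exists_left_inv
  have hmon : (C c * (f + g)).Monic := by
    refine monic_of_natDegree_le_of_coeff_eq_one f.natDegree ?_ (by rw [coeff_C_mul, hc])
    refine (natDegree_C_mul_le _ _).trans (natDegree_add_le_of_degree_le le_rfl ?_)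
    exact natDegree_le_natDegree hg
  have hbf : (b : 𝒯) * algebraMap R[X] 𝒯 f = algebraMap R[X] 𝒯 (f + g) := by
    rw [map_add, ← h, AddSubgroupClass.coe_sub, OneMemClass.coe_one]
    ring
  have hunit := isUnit_algebraMap_of_monic hmon
  rw [map_mul, ← hbf] at hunit
  exact isUnit_of_mul_isUnit_left (isUnit_of_mul_isUnit_right hunit)

lemma isUnit_det_one_sub_of_mem_smallFractions {n : Type*} [Fintype n] [DecidableEq n]
    {N : Matrix n n ℬ} (hN : ∀ i j, N i j ∈ 𝒥) :
    IsUnit (1 - N.map (properFractions R).val).det := by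
  have hmap : 1 - N.map (properFractions R).val = (1 - N).map (properFractions R).val := by
    ext i j
    by_cases h : i = j <;> simp [one_apply, h]
  have hdet := (AlgHom.map_det (properFractions R).val (1 - N)).symm
  rw [AlgHom.mapMatrix_apply, ← hmap] at hdet
  rw [hdet]
  exact isUnit_of_sub_one_mem_smallFractions (det_one_sub_sub_one_mem (S := ℬ) (I := 𝒥) hN)

end ProperFractions

section MonicResidue

open IsLocalRing

lemma mem_smul_top_of_monicResidue_comp_eq_zero {R n : Type*} [CommRing R] [IsLocalRing R]
    [Finite n] {t : n → Localization (monics R)} (ht : monicResidue R ∘ t = 0) :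
    t ∈ (maximalIdeal R • ⊤ : Submodule R (n → Localization (monics R))) := by
  classical
  have := Fintype.ofFinite n
  rw [← Finset.univ_sum_single t]
  refine Submodule.sum_mem _ fun j _ => ?_
  have htj := Submodule.mem_map_of_mem
    (f := LinearMap.single R (fun _ => Localization (monics R)) j)
    (mem_smul_top_of_monicResidue_eq_zero (congrFun ht j))
  rw [Submodule.map_smul''] at htj
  exact Submodule.smul_mono le_rfl le_top htj

end MonicResidue

section Splitting

open Polynomial IsLocalRing

variable {R n : Type*} [CommRing R] [Fintype n]

local notation "𝒯" => Localization (monics R)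

local notation "ℬ" => properFractions R

/-- The sum of a row of polynomials and the product of a row of proper fractions with `G`. -/
noncomputable def splitMap (G : Matrix n n 𝒯) : (n → R[X]) × (n → ℬ) →ₗ[R] (n → 𝒯) :=
  ((IsScalarTower.toAlgHom R R[X] 𝒯).toLinearMap.compLeft n).coprod
    (G.vecMulLinear.restrictScalars R ∘ₗ (properFractions R).val.toLinearMap.compLeft n)

lemma splitMap_apply (G : Matrix n n 𝒯) (a : n → R[X]) (b : n → ℬ) :
    splitMap G (a, b) = algebraMap R[X] 𝒯 ∘ a + ((properFractions R).val ∘ b) ᵥ* G := rfl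

lemma algebraMap_comp_mem_range_splitMap (G : Matrix n n 𝒯) (a : n → R[X]) :
    algebraMap R[X] 𝒯 ∘ a ∈ LinearMap.range (splitMap G) :=
  ⟨(a, 0), by ext; simp [splitMap_apply]⟩

variable [DecidableEq n]

lemma exists_sub_vecMul_mem_range_splitMap {G : Matrix n n 𝒯} (hG : IsUnit G.det) (t : n → 𝒯) :
    ∃ a : n → R[X], t - (algebraMap R[X] 𝒯 ∘ a) ᵥ* G ∈ LinearMap.range (splitMap G) := by
  choose a b hab using fun i => exists_eq_algebraMap_add ((t ᵥ* G⁻¹) i)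
  have htG : t ᵥ* G⁻¹ = algebraMap R[X] 𝒯 ∘ a + (properFractions R).val ∘ b := funext hab
  refine ⟨a, (0, b), ?_⟩
  have ht : t = (t ᵥ* G⁻¹) ᵥ* G := by
    rw [vecMul_vecMul, nonsing_inv_mul _ hG, vecMul_one]
  rw [ht, htG, ← sub_vecMul, add_sub_cancel_left, splitMap_apply]
  ext
  simp

lemma exists_fg_range_splitMap_sup_eq_top [Nontrivial R] {G : Matrix n n 𝒯} (hG : IsUnit G.det) :
    ∃ V : Submodule R (n → 𝒯), V.FG ∧ LinearMap.range (splitMap G) ⊔ V = ⊤ := by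
  obtain ⟨⟨f, hf⟩, hfG⟩ := IsLocalization.exist_integer_multiples_of_finite (monics R)
    fun x : n × n => G x.1 x.2
  choose P hP using fun i j => hfG (i, j)
  have hfm : f.Monic := hf
  have hfin : (degreeLT R f.natDegree).FG :=
    Module.Finite.iff_fg.1 (Module.Finite.equiv (degreeLTEquiv R _).symm)
  let Φ : (n → R[X]) →ₗ[R] (n → 𝒯) :=
    G.vecMulLinear.restrictScalars R ∘ₗ (IsScalarTower.toAlgHom R R[X] 𝒯).toLinearMap.compLeft n
  refine ⟨(Submodule.pi Set.univ fun _ => degreeLT R f.natDegree).map Φ,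
    (Submodule.fg_pi fun _ => hfin).map Φ, top_unique fun t _ => ?_⟩
  obtain ⟨a, ha⟩ := exists_sub_vecMul_mem_range_splitMap hG t
  have hquot : (algebraMap R[X] 𝒯 ∘ fun i => f * (a i /ₘ f)) ᵥ* G ∈
      LinearMap.range (splitMap G) := by
    convert algebraMap_comp_mem_range_splitMap G ((fun i => a i /ₘ f) ᵥ* of P) using 1
    ext j
    simp only [vecMul, dotProduct, Function.comp_apply, map_sum, map_mul, of_apply, hP,
      Algebra.smul_def]
    exact Finset.sum_congr rfl fun i _ => by ring
  have hdecomp : t = (t - (algebraMap R[X] 𝒯 ∘ a) ᵥ* G +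
      (algebraMap R[X] 𝒯 ∘ fun i => f * (a i /ₘ f)) ᵥ* G) + Φ fun i => a i %ₘ f := by
    have hdiv : algebraMap R[X] 𝒯 ∘ a = (algebraMap R[X] 𝒯 ∘ fun i => f * (a i /ₘ f)) +
        algebraMap R[X] 𝒯 ∘ fun i => a i %ₘ f := by
      ext i
      simp only [Function.comp_apply, Pi.add_apply]
      rw [← map_add, add_comm, modByMonic_add_div]
    change t = _ + (algebraMap R[X] 𝒯 ∘ fun i => a i %ₘ f) ᵥ* G
    rw [hdiv, add_vecMul]
    abel
  rw [hdecomp]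
  refine Submodule.add_mem_sup (add_mem ha hquot) (Submodule.mem_map_of_mem fun i _ =>
    mem_degreeLT.2 ?_)
  rw [← degree_eq_natDegree hfm.ne_zero]
  exact degree_modByMonic_lt _ hfm

variable [IsLocalRing R]

local notation "𝔪" => maximalIdeal R

local notation "π" => monicResidue R

lemma range_splitMap_sup_smul_top {G : Matrix n n 𝒯} {G₀ : Matrix n n R[X]} (hG : IsUnit G.det)
    (hG₀ : G.map π = (G₀.map (algebraMap R[X] 𝒯)).map π) :
    LinearMap.range (splitMap G) ⊔ 𝔪 • ⊤ = ⊤ := by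
  refine top_unique fun t _ => ?_
  obtain ⟨a, ha⟩ := exists_sub_vecMul_mem_range_splitMap hG t
  let a' := algebraMap R[X] 𝒯 ∘ a
  have ha' : a' ᵥ* G₀.map (algebraMap R[X] 𝒯) ∈ LinearMap.range (splitMap G) := by
    convert algebraMap_comp_mem_range_splitMap G (a ᵥ* G₀) using 1
    ext j
    exact (RingHom.map_vecMul (algebraMap R[X] 𝒯) G₀ a j).symm
  have hdecomp : t = (t - a' ᵥ* G + a' ᵥ* G₀.map (algebraMap R[X] 𝒯)) +
      a' ᵥ* (G - G₀.map (algebraMap R[X] 𝒯)) := by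
    rw [vecMul_sub]
    abel
  rw [hdecomp]
  refine Submodule.add_mem_sup (add_mem ha ha') (mem_smul_top_of_monicResidue_comp_eq_zero ?_)
  ext j
  rw [Function.comp_apply, RingHom.map_vecMul, Matrix.map_sub _ (map_sub _), hG₀, sub_self,
    vecMul_zero]

lemma range_splitMap_eq_top {G : Matrix n n 𝒯} {G₀ : Matrix n n R[X]} (hG : IsUnit G.det)
    (hG₀ : G.map π = (G₀.map (algebraMap R[X] 𝒯)).map π) :
    LinearMap.range (splitMap G) = ⊤ := by
  set W := LinearMap.range (splitMap G)
  obtain ⟨V, hVfg, hV⟩ := exists_fg_range_splitMap_sup_eq_top hG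
  have hVW : V ≤ W := by
    refine Submodule.le_of_le_smul_of_le_jacobson_bot hVfg
      (IsLocalRing.jacobson_eq_maximalIdeal ⊥ bot_ne_top).ge ?_
    calc V ≤ W ⊔ 𝔪 • (W ⊔ V) := by rw [hV, range_splitMap_sup_smul_top hG hG₀]; exact le_top
      _ ≤ W ⊔ 𝔪 • V := by
        rw [Submodule.smul_sup, ← sup_assoc]
        exact sup_le_sup_right (sup_le le_rfl Submodule.smul_le_right) _
  rw [← hV, sup_eq_left.2 hVW]

lemma exists_eq_add_vecMul {G : Matrix n n 𝒯} {G₀ : Matrix n n R[X]} (hG : IsUnit G.det)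
    (hG₀ : G.map π = (G₀.map (algebraMap R[X] 𝒯)).map π) {t : n → 𝒯} (ht : π ∘ t = 0) :
    ∃ (a : n → R[X]) (b : n → ℬ), (∀ j, (a j).map (residue R) = 0) ∧
      (∀ j, b j ∈ smallFractions R) ∧
      t = algebraMap R[X] 𝒯 ∘ a + ((properFractions R).val ∘ b) ᵥ* G := by
  have htop := mem_smul_top_of_monicResidue_comp_eq_zero ht
  rw [← range_splitMap_eq_top hG hG₀, LinearMap.range_eq_map, ← Submodule.map_smul''] at htop
  obtain ⟨x, hx, rfl⟩ := htop
  refine ⟨x.1, x.2, ?_, ?_, splitMap_apply G x.1 x.2⟩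
  · refine Submodule.smul_induction_on hx (fun r hr x _ j => ?_) (fun x y h h' j => ?_)
    · simp [(residue_eq_zero_iff r).2 hr, smul_eq_C_mul]
    · simp [h j, h' j]
  · refine Submodule.smul_induction_on hx (fun r hr x _ j => ?_) (fun x y h h' j => ?_)
    · exact smul_mem_smallFractions hr _
    · exact Ideal.add_mem _ (h j) (h' j)

theorem exists_map_eq_one_sub_mul {G : Matrix n n 𝒯} {G₀ : Matrix n n R[X]} (hG : IsUnit G.det)
    (hG₀ : G.map π = (G₀.map (algebraMap R[X] 𝒯)).map π) :
    ∃ (H : Matrix n n R[X]) (N : Matrix n n ℬ), (∀ i j, N i j ∈ smallFractions R) ∧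
      H.map (algebraMap R[X] 𝒯) = (1 - N.map (properFractions R).val) * G ∧
      H.map (mapRingHom (residue R)) = G₀.map (mapRingHom (residue R)) ∧
      ∀ i, G i = algebraMap R[X] 𝒯 ∘ G₀ i → H i = G₀ i := by
  have hrow (i : n) : ∃ (a : n → R[X]) (b : n → ℬ), (∀ j, (a j).map (residue R) = 0) ∧
      (∀ j, b j ∈ smallFractions R) ∧
      G i - algebraMap R[X] 𝒯 ∘ G₀ i =
        algebraMap R[X] 𝒯 ∘ a + ((properFractions R).val ∘ b) ᵥ* G ∧
      (G i = algebraMap R[X] 𝒯 ∘ G₀ i → a = 0) := by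
    by_cases hi : G i = algebraMap R[X] 𝒯 ∘ G₀ i
    · exact ⟨0, 0, by simp, fun _ => Ideal.zero_mem _, by ext; simp [hi],
        fun _ => rfl⟩
    · obtain ⟨a, b, ha, hb, hab⟩ := exists_eq_add_vecMul hG hG₀
        (t := G i - algebraMap R[X] 𝒯 ∘ G₀ i) (by
          ext j
          simpa [sub_eq_zero] using congrFun₂ hG₀ i j)
      exact ⟨a, b, ha, hb, hab, fun h => absurd h hi⟩
  choose a b ha hb hab ha₀ using hrow
  refine ⟨G₀ + of a, of b, hb, ?_, ?_, fun i hi => ?_⟩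
  · ext i j
    have hij : G i j - algebraMap R[X] 𝒯 (G₀ i j) = algebraMap R[X] 𝒯 (a i j) +
      ((of b).map (properFractions R).val * G) i j := congrFun (hab i) j
    rw [Matrix.sub_mul, Matrix.one_mul, Matrix.sub_apply, map_apply, Matrix.add_apply, map_add,
      of_apply]
    linear_combination -hij
  · ext1 i j
    simp [ha]
  · ext1 j
    simp [ha₀ i hi]

end Splitting

lemma det_fromBlocks_smul_comm {S ι κ : Type*} [CommRing S] [IsDomain S] [Fintype ι] [Fintype κ]
    [DecidableEq ι] [DecidableEq κ] (q : S) (A : Matrix ι ι S) (B : Matrix ι κ S)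
    (C : Matrix κ ι S) (D : Matrix κ κ S) :
    (fromBlocks A (q • B) C D).det = (fromBlocks A B (q • C) D).det := by
  by_cases hq : q = 0
  · simp [hq]
  have hconj : fromBlocks A B (q • C) D * fromBlocks 1 0 0 (q • 1) =
      fromBlocks 1 0 0 (q • 1) * fromBlocks A (q • B) C D := by
    simp [fromBlocks_multiply]
  have hdet := congrArg det hconj
  rw [det_mul, det_mul, mul_comm, det_fromBlocks_zero₂₁, det_one, one_mul, det_smul, det_one,
    mul_one] at hdet
  exact (mul_left_cancel₀ (pow_ne_zero _ hq) hdet).symm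

section GlueRows

variable {S T ι κ : Type*} [CommRing S] [CommRing T]

/-- The upper block row of `X` on top of the lower block row of `Y`, with the lower left block
multiplied by `q`. -/
def glueRows (q : T) (X Y : Matrix (ι ⊕ κ) (ι ⊕ κ) T) : Matrix (ι ⊕ κ) (ι ⊕ κ) T :=
  fromBlocks X.toBlocks₁₁ X.toBlocks₁₂ (q • Y.toBlocks₂₁) Y.toBlocks₂₂

lemma glueRows_map (f : S →+* T) (q : S) (X Y : Matrix (ι ⊕ κ) (ι ⊕ κ) S) :
    (glueRows q X Y).map f = glueRows (f q) (X.map f) (Y.map f) := by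
  ext (i | i) (j | j) <;> simp [glueRows, toBlocks₁₁, toBlocks₁₂, toBlocks₂₁, toBlocks₂₂]

lemma glueRows_one_sub [DecidableEq ι] [DecidableEq κ] (q : T)
    (X Y : Matrix (ι ⊕ κ) (ι ⊕ κ) T) :
    glueRows q (1 - X) (1 - Y) = 1 - glueRows q X Y := by
  ext (i | i) (j | j) <;>
    simp [glueRows, toBlocks₁₁, toBlocks₁₂, toBlocks₂₁, toBlocks₂₂, one_apply]

lemma glueRows_mul_fromBlocks [Fintype ι] [Fintype κ] (q : T) (X Y : Matrix (ι ⊕ κ) (ι ⊕ κ) T)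
    (P : Matrix ι ι T) (Q : Matrix ι κ T) (S : Matrix κ ι T) (D : Matrix κ κ T) :
    glueRows q X Y * fromBlocks P Q (q • S) D =
      glueRows q (X * fromBlocks P Q (q • S) D) (Y * fromBlocks P (q • Q) S D) := by
  rw [← fromBlocks_toBlocks X, ← fromBlocks_toBlocks Y]
  simp [glueRows, fromBlocks_multiply]

end GlueRows

section NormalForm

lemma map_smul_eq_zero {S T m n : Type*} [CommRing S] [CommRing T] {f : S →+* T} {q : S}
    (hq : f q = 0) (M : Matrix m n S) : (q • M).map f = 0 := by
  ext
  simp [hq]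

variable {T F ι κ : Type*} [CommRing T] [Field F] [Fintype ι] [Fintype κ] [DecidableEq ι]
  [DecidableEq κ] {f : T →+* F} {q : T} {P : Matrix ι ι T} {Q : Matrix ι κ T} {S : Matrix κ ι T}
  {D : Matrix κ κ T}

lemma exists_fromBlocks_map_eq_map_eq_one (hf : ∀ d ≠ 0, ∃ t, IsUnit t ∧ f t = d) (hq : f q = 0)
    (hG : IsUnit (fromBlocks P Q (q • S) D).det) {i₀ : ι} {Γ : Matrix ι ι F} (hΓ : IsUnit Γ.det)
    (hrow : Γ i₀ = f ∘ P i₀) :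
    ∃ (P' : Matrix ι ι T) (Q' : Matrix ι κ T) (S' : Matrix κ ι T) (D' : Matrix κ κ T),
      IsUnit (fromBlocks P' Q' (q • S') D').det ∧ P' i₀ = P i₀ ∧ Q' i₀ = Q i₀ ∧
      P'.map f = Γ ∧ D'.map f = 1 := by
  have hdet : (P.map f).det * (D.map f).det ≠ 0 := by
    have hmap := (hG.map f).ne_zero
    rwa [RingHom.map_det, RingHom.mapMatrix_apply, fromBlocks_map, map_smul_eq_zero hq,
      det_fromBlocks_zero₂₁]
      at hmap
  have hP : IsUnit (P.map f).det := IsUnit.mk0 _ (left_ne_zero_of_mul hdet)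
  have hD : IsUnit (D.map f).det := IsUnit.mk0 _ (right_ne_zero_of_mul hdet)
  have hΓP : (Γ * (P.map f)⁻¹) i₀ = Pi.single i₀ 1 := by
    rw [mul_apply_eq_vecMul, hrow, show f ∘ P i₀ = P.map f i₀ from rfl, ← mul_apply_eq_vecMul,
      mul_nonsing_inv _ hP]
    ext j
    simp [one_apply, Pi.single_apply, eq_comm]
  obtain ⟨H, hH, hHf, hHrow⟩ := exists_isUnit_det_map_eq_of_row_eq_single hf (by
    rw [det_mul]
    exact (hΓ.mul (isUnit_nonsing_inv_det _ hP)).ne_zero) hΓP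
  obtain ⟨E, hE, hEf⟩ := exists_isUnit_det_map_eq hf _ (isUnit_nonsing_inv_det _ hD).ne_zero
  refine ⟨H * P, H * Q, E * S, E * D, ?_, ?_, ?_, ?_, ?_⟩
  · have hmul : fromBlocks (H * P) (H * Q) (q • (E * S)) (E * D) =
        fromBlocks H 0 0 E * fromBlocks P Q (q • S) D := by
      simp [fromBlocks_multiply]
    rw [hmul, det_mul, det_fromBlocks_zero₂₁]
    exact (hH.mul hE).mul hG
  · rw [mul_apply_eq_vecMul, hHrow, single_one_vecMul, row_def]
  · rw [mul_apply_eq_vecMul, hHrow, single_one_vecMul, row_def]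
  · rw [Matrix.map_mul, hHf, nonsing_inv_mul_cancel_right _ _ hP]
  · rw [Matrix.map_mul, hEf, nonsing_inv_mul _ hD]

lemma exists_fromBlocks_map_eq_zero_map_eq_one (hf : Function.Surjective f) (hq : f q = 0)
    (hG : IsUnit (fromBlocks P Q (q • S) D).det) (hP : IsUnit (P.map f).det)
    (hD : D.map f = 1) :
    ∃ (S' : Matrix κ ι T) (D' : Matrix κ κ T),
      IsUnit (fromBlocks P Q (q • S') D').det ∧ S'.map f = 0 ∧ D'.map f = 1 := by
  obtain ⟨L, hL⟩ : ∃ L : Matrix κ ι T, L.map f = S.map f * (P.map f)⁻¹ := by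
    choose L hL using fun i j => hf ((S.map f * (P.map f)⁻¹) i j)
    exact ⟨L, Matrix.ext hL⟩
  refine ⟨S - L * P, D - q • (L * Q), ?_, ?_, ?_⟩
  · have hmul : fromBlocks P Q (q • (S - L * P)) (D - q • (L * Q)) =
        fromBlocks 1 0 (-(q • L)) 1 * fromBlocks P Q (q • S) D := by
      simp [fromBlocks_multiply, sub_eq_neg_add]
    rw [hmul, det_mul, det_fromBlocks_zero₁₂]
    simpa using hG
  · rw [Matrix.map_sub _ (map_sub _), Matrix.map_mul, hL, nonsing_inv_mul_cancel_right _ _ hP,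
      sub_self]
  · rw [Matrix.map_sub _ (map_sub _), hD, sub_eq_self]
    ext
    simp [hq]

lemma exists_fromBlocks_map_row_eq_zero (hf : Function.Surjective f) (hq : f q = 0)
    (hG : IsUnit (fromBlocks P Q (q • S) D).det) (hD : D.map f = 1) (i₀ : ι) :
    ∃ (P' : Matrix ι ι T) (Q' : Matrix ι κ T),
      IsUnit (fromBlocks P' Q' (q • S) D).det ∧ P' i₀ = P i₀ ∧ Q' i₀ = Q i₀ ∧
      P'.map f = P.map f ∧ ∀ i, i ≠ i₀ → f ∘ Q' i = 0 := by
  choose M hM using fun i j => hf (Q.map f i j)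
  let M' : Matrix ι κ T := (of M).updateRow i₀ 0
  refine ⟨P - q • (M' * S), Q - M' * D, ?_, ?_, ?_, ?_, fun i hi => ?_⟩
  · have hmul : fromBlocks (P - q • (M' * S)) (Q - M' * D) (q • S) D =
        fromBlocks 1 (-M') 0 1 * fromBlocks P Q (q • S) D := by
      simp [fromBlocks_multiply, sub_eq_add_neg]
    rw [hmul, det_mul, det_fromBlocks_zero₂₁]
    simpa using hG
  · ext j
    simp [M', mul_apply]
  · ext j
    simp [M', mul_apply]
  · rw [Matrix.map_sub _ (map_sub _), sub_eq_self]
    ext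
    simp [hq]
  · ext j
    have hMD : (M' * D).map f = M'.map f := by
      rw [Matrix.map_mul, hD, Matrix.mul_one]
    have hMDij : f ((M' * D) i j) = f (M' i j) := congrFun₂ hMD i j
    simp [hMDij, M', hi, hM]

end NormalForm

section Horrocks

open Polynomial IsLocalRing

variable {R : Type*} [CommRing R] [IsLocalRing R]

local notation "𝒯" => Localization (monics R)

local notation "𝔪" => maximalIdeal R

local notation "ℬ" => properFractions R

local notation "ℱ" => FractionRing (ResidueField R)[X]

local notation "π" => monicResidue R

lemma isUnit_of_isUnit_algebraMap_of_isUnit_map [IsDomain R] {g : R[X]}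
    (hg : IsUnit (algebraMap R[X] 𝒯 g)) (hg' : IsUnit (g.map (residue R))) : IsUnit g := by
  obtain ⟨t, ht⟩ := hg.exists_right_inv
  obtain ⟨f, h, hf, hfh⟩ := exists_monic_mul_eq t
  have hgh : g * h = f := by
    apply IsLocalization.injective 𝒯 (monics_le_nonZeroDivisors (R := R))
    rw [map_mul, ← hfh, ← mul_assoc, ht, one_mul]
  have hlc : IsUnit g.leadingCoeff := by
    rw [← hgh, Monic, leadingCoeff_mul] at hf
    exact IsUnit.of_mul_eq_one _ hf
  have hdeg : g.natDegree = 0 := by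
    rw [← natDegree_map_of_leadingCoeff_ne_zero (residue R) (hlc.map (residue R)).ne_zero]
    exact natDegree_eq_zero_of_isUnit hg'
  rw [leadingCoeff, hdeg] at hlc
  rw [eq_C_of_natDegree_eq_zero hdeg]
  exact hlc.map C

lemma monicResidue_algebraMap_C_eq_zero {q : R} (hq : q ∈ 𝔪) :
    π (algebraMap R[X] 𝒯 (C q)) = 0 := by
  rw [monicResidue_algebraMap, map_C, (residue_eq_zero_iff q).2 hq, C_0, map_zero]

lemma map_algebraMap_map_monicResidue {m n : Type*} (M : Matrix m n R[X]) :
    (M.map (algebraMap R[X] 𝒯)).map π =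
      (M.map (mapRingHom (residue R))).map (algebraMap (ResidueField R)[X] ℱ) := by
  ext i j
  exact monicResidue_algebraMap (M i j)

variable {ι κ : Type*} [Fintype ι] [Fintype κ] [DecidableEq ι] [DecidableEq κ]

lemma exists_fromBlocks_normal_form {q : R} (hq : q ∈ 𝔪) {i₀ : ι} {u : ι ⊕ κ → R[X]}
    (hu : Completable (algebraMap R[X] 𝒯 (C q)) (Set.range Sum.inl) (Sum.inl i₀)
      (algebraMap R[X] 𝒯 ∘ u))
    {P₀ : Matrix ι ι R[X]} (hP₀ : IsUnit (P₀.map (mapRingHom (residue R))).det)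
    (hrow : P₀ i₀ = u ∘ Sum.inl) :
    ∃ (P : Matrix ι ι 𝒯) (Q : Matrix ι κ 𝒯) (S : Matrix κ ι 𝒯) (D : Matrix κ κ 𝒯),
      IsUnit (fromBlocks P Q (algebraMap R[X] 𝒯 (C q) • S) D).det ∧
      P i₀ = algebraMap R[X] 𝒯 ∘ u ∘ Sum.inl ∧ Q i₀ = algebraMap R[X] 𝒯 ∘ u ∘ Sum.inr ∧
      P.map π = (P₀.map (algebraMap R[X] 𝒯)).map π ∧ (∀ i, i ≠ i₀ → π ∘ Q i = 0) ∧
      S.map π = 0 ∧ D.map π = 1 := by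
  obtain ⟨G, hG, hGu⟩ := hu
  choose S₀ hS₀ using fun i j => hG.dvd (Sum.inr i) (by simp) (Sum.inl j) (by simp)
  have hblocks : fromBlocks G.toBlocks₁₁ G.toBlocks₁₂ (algebraMap R[X] 𝒯 (C q) • of S₀)
      G.toBlocks₂₂ = G := by
    rw [← fromBlocks_toBlocks G]
    congr 1
    ext i j
    exact (hS₀ i j).symm
  have hdet := hG.isUnit_det
  rw [← hblocks] at hdet
  have hP₀' : IsUnit ((P₀.map (algebraMap R[X] 𝒯)).map π).det := by
    have := hP₀.map (algebraMap (ResidueField R)[X] ℱ)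
    rwa [RingHom.map_det, RingHom.mapMatrix_apply, ← map_algebraMap_map_monicResidue] at this
  have hlift : ∀ d ≠ 0, ∃ t, IsUnit t ∧ π t = d := fun _ => exists_isUnit_monicResidue_eq
  have hsurj := surjective_of_forall_ne_zero hlift
  have hq' := monicResidue_algebraMap_C_eq_zero hq
  obtain ⟨P₁, Q₁, S₁, D₁, h₁, hPu₁, hQu₁, hP₁, hD₁⟩ :=
    exists_fromBlocks_map_eq_map_eq_one hlift hq' hdet hP₀' (i₀ := i₀) (by
      have hG₁₁ : G.toBlocks₁₁ i₀ = algebraMap R[X] 𝒯 ∘ u ∘ Sum.inl :=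
        congrArg (· ∘ Sum.inl) hGu
      rw [hG₁₁, ← hrow]
      rfl)
  obtain ⟨S, D, h₂, hS, hD⟩ :=
    exists_fromBlocks_map_eq_zero_map_eq_one hsurj hq' h₁ (hP₁ ▸ hP₀') hD₁
  obtain ⟨P, Q, h, hPu, hQu, hP, hQ⟩ := exists_fromBlocks_map_row_eq_zero hsurj hq' h₂ hD i₀
  exact ⟨P, Q, S, D, h, (hPu.trans hPu₁).trans (congrArg (· ∘ Sum.inl) hGu),
    (hQu.trans hQu₁).trans (congrArg (· ∘ Sum.inr) hGu), hP.trans hP₁, hQ, hS, hD⟩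

lemma isUnit_det_map_glueRows {q : R} {P : Matrix ι ι 𝒯} {Q : Matrix ι κ 𝒯} {S : Matrix κ ι 𝒯}
    {D : Matrix κ κ 𝒯} (hG : IsUnit (fromBlocks P Q (algebraMap R[X] 𝒯 (C q) • S) D).det)
    {H H' : Matrix (ι ⊕ κ) (ι ⊕ κ) R[X]} {N N' : Matrix (ι ⊕ κ) (ι ⊕ κ) ℬ}
    (hN : ∀ i j, N i j ∈ smallFractions R)
    (hH : H.map (algebraMap R[X] 𝒯) = (1 - N.map (properFractions R).val) *
      fromBlocks P Q (algebraMap R[X] 𝒯 (C q) • S) D)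
    (hN' : ∀ i j, N' i j ∈ smallFractions R)
    (hH' : H'.map (algebraMap R[X] 𝒯) = (1 - N'.map (properFractions R).val) *
      fromBlocks P (algebraMap R[X] 𝒯 (C q) • Q) S D) :
    IsUnit ((glueRows (C q) H H').map (algebraMap R[X] 𝒯)).det := by
  let Nq := glueRows (algebraMap R ℬ q) N N'
  have hNq : ∀ i j, Nq i j ∈ smallFractions R := by
    rintro (i | i) (j | j)
    · exact hN _ _
    · exact hN _ _
    · exact Ideal.mul_mem_left _ _ (hN' _ _)
    · exact hN' _ _
  have hNqmap : Nq.map (properFractions R).val = glueRows (algebraMap R[X] 𝒯 (C q))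
      (N.map (properFractions R).val) (N'.map (properFractions R).val) :=
    glueRows_map (properFractions R).val.toRingHom _ N N'
  have hglue : (glueRows (C q) H H').map (algebraMap R[X] 𝒯) =
      (1 - Nq.map (properFractions R).val) *
        fromBlocks P Q (algebraMap R[X] 𝒯 (C q) • S) D := by
    rw [glueRows_map, hH, hH', ← glueRows_mul_fromBlocks, glueRows_one_sub, hNqmap]
  rw [hglue, det_mul]
  exact (isUnit_det_one_sub_of_mem_smallFractions hNq).mul hG

lemma exists_isRelParabolic_of_fromBlocks_map_eq [IsDomain R] {q : R} (hq : q ∈ 𝔪)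
    {P : Matrix ι ι 𝒯} {Q : Matrix ι κ 𝒯} {S : Matrix κ ι 𝒯} {D : Matrix κ κ 𝒯}
    (hG : IsUnit (fromBlocks P Q (algebraMap R[X] 𝒯 (C q) • S) D).det)
    {P₀ : Matrix ι ι R[X]} {Q₀ : Matrix ι κ R[X]}
    (hP₀ : IsUnit (P₀.map (mapRingHom (residue R))).det)
    (hP : P.map π = (P₀.map (algebraMap R[X] 𝒯)).map π)
    (hQ : Q.map π = (Q₀.map (algebraMap R[X] 𝒯)).map π) (hS : S.map π = 0) (hD : D.map π = 1) :
    ∃ H : Matrix (ι ⊕ κ) (ι ⊕ κ) R[X], IsRelParabolic (C q) (Set.range Sum.inl) H ∧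
      ∀ i, P i = algebraMap R[X] 𝒯 ∘ P₀ i → Q i = algebraMap R[X] 𝒯 ∘ Q₀ i →
        H (Sum.inl i) = Sum.elim (P₀ i) (Q₀ i) := by
  let φ := algebraMap R[X] 𝒯
  have hG' : IsUnit (fromBlocks P (φ (C q) • Q) S D).det := by
    rwa [det_fromBlocks_smul_comm]
  have hφq : π (φ (C q)) = 0 := monicResidue_algebraMap_C_eq_zero hq
  obtain ⟨H, N, hN, hHN, hHres, hHrow⟩ :=
    exists_map_eq_one_sub_mul (G₀ := fromBlocks P₀ Q₀ 0 1) hG (by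
      rw [fromBlocks_map, hP, hQ, hD, map_smul_eq_zero hφq]
      simp [fromBlocks_map])
  obtain ⟨H', N', hN', hHN', hHres', -⟩ :=
    exists_map_eq_one_sub_mul (G₀ := fromBlocks P₀ 0 0 1) hG' (by
      rw [fromBlocks_map, hP, hS, hD, map_smul_eq_zero hφq]
      simp [fromBlocks_map])
  refine ⟨glueRows (C q) H H', ⟨isUnit_of_isUnit_algebraMap_of_isUnit_map ?_ ?_, ?_⟩, ?_⟩
  · rw [RingHom.map_det]
    exact isUnit_det_map_glueRows hG hN hHN hN' hHN'
  · have hres : (glueRows (C q) H H').map (mapRingHom (residue R)) =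
        fromBlocks (P₀.map (mapRingHom (residue R))) (Q₀.map (mapRingHom (residue R))) 0 1 := by
      rw [glueRows_map, hHres, hHres']
      simp [glueRows, fromBlocks_map, (residue_eq_zero_iff q).2 hq]
    rwa [← coe_mapRingHom, RingHom.map_det, RingHom.mapMatrix_apply, hres,
      det_fromBlocks_zero₂₁, det_one, mul_one]
  · rintro (i | i) hi (j | j) hj
    · simp at hi
    · simp at hi
    · simp [glueRows]
    · simp at hj
  · intro i hPi hQi
    have hHi := hHrow (Sum.inl i) (by
      ext (j | j)
      · exact congrFun hPi j
      · exact congrFun hQi j)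
    ext1 (j | j)
    · exact congrFun hHi (Sum.inl j)
    · exact congrFun hHi (Sum.inr j)

theorem RelUnimodular.completable_sum_of_mem_maximalIdeal [IsDomain R] {q : R} (hq : q ∈ 𝔪)
    {i₀ : ι} {u : ι ⊕ κ → R[X]} (hu : RelUnimodular (C q) (Set.range Sum.inl) u)
    (hT : Completable (algebraMap R[X] 𝒯 (C q)) (Set.range Sum.inl) (Sum.inl i₀)
      (algebraMap R[X] 𝒯 ∘ u)) :
    Completable (C q) (Set.range Sum.inl) (Sum.inl i₀) u := by
  obtain ⟨Γ, hΓ, hΓu⟩ : ∃ Γ : Matrix ι ι (ResidueField R)[X], IsUnit Γ.det ∧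
      Γ i₀ = mapRingHom (residue R) ∘ u ∘ Sum.inl := by
    obtain ⟨v, hv, huv⟩ := hu.map (mapRingHom (residue R))
    have hv0 (j : κ) : v (Sum.inr j) = 0 := by
      simpa [(residue_eq_zero_iff q).2 hq] using hv (Sum.inr j) (by simp)
    refine exists_isUnit_det_row_eq i₀ (v := v ∘ Sum.inl) ?_
    simpa [dotProduct, hv0] using huv
  choose Γ₀ hΓ₀ using fun i j => map_surjective (residue R) residue_surjective (Γ i j)
  let P₀ : Matrix ι ι R[X] := (of Γ₀).updateRow i₀ (u ∘ Sum.inl)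
  let Q₀ : Matrix ι κ R[X] := updateRow 0 i₀ (u ∘ Sum.inr)
  have hP₀u : P₀ i₀ = u ∘ Sum.inl := updateRow_self ..
  have hQ₀u : Q₀ i₀ = u ∘ Sum.inr := updateRow_self ..
  have hP₀ : P₀.map (mapRingHom (residue R)) = Γ := by
    ext1 i j
    by_cases hi : i = i₀
    · subst hi
      simp [P₀, hΓu]
    · simp [P₀, hi, hΓ₀]
  obtain ⟨P, Q, S, D, hdet, hPu, hQu, hP, hQ, hS, hD⟩ :=
    exists_fromBlocks_normal_form hq hT (hP₀ ▸ hΓ) hP₀u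
  have hQ' : Q.map π = (Q₀.map (algebraMap R[X] 𝒯)).map π := by
    ext i j
    by_cases hi : i = i₀
    · subst hi
      simp [Q₀, hQu]
    · simpa [Q₀, hi] using congrFun (hQ i hi) j
  obtain ⟨H, hH, hHrow⟩ :=
    exists_isRelParabolic_of_fromBlocks_map_eq hq hdet (hP₀ ▸ hΓ) hP hQ' hS hD
  refine ⟨H, hH, (hHrow i₀ ?_ ?_).trans ?_⟩
  · rw [hPu, hP₀u]
  · rw [hQu, hQ₀u]
  · rw [hP₀u, hQ₀u, Sum.elim_comp_inl_inr]

lemma RelUnimodular.completable_of_mem_maximalIdeal [IsDomain R] {n : Type*} [Fintype n]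
    [DecidableEq n] {q : R} (hq : q ∈ 𝔪) {S : Set n} {i₀ : n} (hi₀ : i₀ ∈ S) {u : n → R[X]}
    (hu : RelUnimodular (C q) S u)
    (hT : Completable (algebraMap R[X] 𝒯 (C q)) S i₀ (algebraMap R[X] 𝒯 ∘ u)) :
    Completable (C q) S i₀ u := by
  classical
  change Completable _ S (Equiv.Set.sumCompl S (Sum.inl ⟨i₀, hi₀⟩)) _ at hT ⊢
  have hu' := hu.comp_equiv (Equiv.Set.sumCompl S)
  rw [← completable_comp_equiv, preimage_sumCompl] at hT ⊢
  rw [preimage_sumCompl] at hu'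
  exact hu'.completable_sum_of_mem_maximalIdeal hq hT

theorem RelUnimodular.completable_of_isLocalRing [IsDomain R] {n : Type*} [Fintype n]
    [DecidableEq n] {q : R} {S : Set n} {i₀ : n} (hi₀ : i₀ ∈ S) {u : n → R[X]}
    (hu : RelUnimodular (C q) S u)
    (hT : Completable (algebraMap R[X] 𝒯 (C q)) S i₀ (algebraMap R[X] 𝒯 ∘ u)) :
    Completable (C q) S i₀ u := by
  by_cases hq : q ∈ 𝔪
  · exact hu.completable_of_mem_maximalIdeal hq hi₀ hT
  · have hqC : IsUnit (C q) := ((notMem_maximalIdeal).1 hq).map C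
    obtain ⟨v, -, huv⟩ := hu
    have hu' : RelUnimodular (C (0 : R)) Set.univ u := ⟨v, fun j hj => (hj trivial).elim, huv⟩
    rw [completable_iff_of_isUnit (hqC.map _)] at hT
    rw [completable_iff_of_isUnit hqC, ← completable_univ_iff (q := C (0 : R))]
    exact hu'.completable_of_mem_maximalIdeal (Ideal.zero_mem _) (Set.mem_univ i₀)
      (completable_univ_iff.2 hT)

end Horrocks

section Substitution

open Polynomial

variable {A B : Type*} [CommRing A] [CommRing B]

/-- The substitution `x ↦ x + a y`, with values in polynomials in `y` over polynomials in `x`. -/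
noncomputable def shift (a : A) : A[X] →+* A[X][X] :=
  eval₂RingHom (C.comp C) (C X + C (C a) * X)

/-- The substitution `y ↦ c y`. -/
noncomputable def dilate (c : A) : A[X][X] →+* A[X][X] :=
  eval₂RingHom C (C (C c) * X)

lemma shift_zero : shift (0 : A) = C := by
  apply Polynomial.ringHom_ext <;> simp [shift]

lemma shift_C (a r : A) : shift a (C r) = C (C r) := by
  simp [shift]

lemma dilate_C (c : A) (f : A[X]) : dilate c (C f) = C f := by
  simp [dilate]

lemma dilate_X (c : A) : dilate c X = C (C c) * X := by
  simp [dilate]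

lemma dilate_comp_shift (c a : A) : (dilate c).comp (shift a) = shift (c * a) := by
  apply Polynomial.ringHom_ext
  · simp [dilate, shift]
  · simp [dilate, shift]
    ring

lemma eval₂RingHom_shift_comp_shift (a b : A) :
    (eval₂RingHom (shift b) X).comp (shift a) = shift (a + b) := by
  apply Polynomial.ringHom_ext
  · simp [shift]
  · simp [shift]
    ring

lemma constantCoeff_comp_shift (a : A) : constantCoeff.comp (shift a) = RingHom.id A[X] := by
  apply Polynomial.ringHom_ext <;> simp [shift]

lemma mapRingHom_comp_shift (f : A →+* B) (a : A) :
    (mapRingHom (mapRingHom f)).comp (shift a) = (shift (f a)).comp (mapRingHom f) := by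
  apply Polynomial.ringHom_ext <;> simp [shift]

lemma mapRingHom_comp_dilate (f : A →+* B) (c : A) :
    (mapRingHom (mapRingHom f)).comp (dilate c) =
      (dilate (f c)).comp (mapRingHom (mapRingHom f)) := by
  apply Polynomial.ringHom_ext <;> simp [dilate]

end Substitution

section Patching

open Polynomial

variable {A n : Type*} [CommRing A]

lemma comp_vecMul {B : Type*} [CommRing B] [Fintype n] (f : A →+* B) (u : n → A)
    (G : Matrix n n A) : f ∘ (u ᵥ* G) = (f ∘ u) ᵥ* G.map f :=
  funext fun j => RingHom.map_vecMul f G u j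

lemma exists_eq_C_mul_of_coeff_zero_eq_zero {a : A} {f : A[X]} (hf : f.coeff 0 = 0)
    (ha : C a ∣ f) : ∃ g, g.coeff 0 = 0 ∧ f = C a * g := by
  obtain ⟨g, rfl⟩ := ha
  refine ⟨g - C (g.coeff 0), by simp, ?_⟩
  rw [mul_sub, ← C_mul, ← coeff_C_mul, hf, C_0, sub_zero]

attribute [local instance] Polynomial.algebra Polynomial.isLocalization in
lemma exists_common_denominator {B σ : Type*} [CommRing B] [Algebra A B] (M : Submonoid A)
    [IsLocalization M B] [Finite σ] (f : σ → B[X][X]) :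
    ∃ s ∈ M, ∀ i, ∃ g : A[X][X], mapRingHom (mapRingHom (algebraMap A B)) g =
      C (C (algebraMap A B s)) * f i := by
  obtain ⟨⟨b, b', ⟨s, hs, rfl⟩, rfl⟩, hb⟩ := IsLocalization.exist_integer_multiples_of_finite
    ((M.map (C : A →+* A[X])).map (C : A[X] →+* A[X][X])) f
  refine ⟨s, hs, fun i => ?_⟩
  obtain ⟨g, hg⟩ := hb i
  refine ⟨g, ?_⟩
  change mapRingHom (mapRingHom (algebraMap A B)) g = _ at hg
  rw [hg, Algebra.smul_def]
  change mapRingHom (mapRingHom (algebraMap A B)) (C (C s)) * f i = _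
  simp

lemma exists_map_eq_dilate {B σ : Type*} [CommRing B] [Algebra A B] (M : Submonoid A)
    [IsLocalization M B] [Finite σ] {f : σ → B[X][X]} (hf : ∀ i, (f i).coeff 0 = 0) :
    ∃ s ∈ M, ∀ i, ∃ g : A[X][X],
      mapRingHom (mapRingHom (algebraMap A B)) g = dilate (algebraMap A B s) (f i) := by
  obtain ⟨s, hs, hsf⟩ := exists_common_denominator M fun i => (f i).divX
  refine ⟨s, hs, fun i => ?_⟩
  obtain ⟨g, hg⟩ := hsf i
  have hgs := RingHom.congr_fun (mapRingHom_comp_dilate (algebraMap A B) s) g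
  rw [RingHom.comp_apply, RingHom.comp_apply, hg, map_mul, dilate_C] at hgs
  have hfX : f i = X * (f i).divX := by
    conv_lhs => rw [← X_mul_divX_add (f i), hf, C_0, add_zero]
  have hfs := congrArg (dilate (algebraMap A B s)) hfX
  rw [map_mul, dilate_X] at hfs
  refine ⟨X * dilate s g, ?_⟩
  rw [map_mul, hgs, hfs, coe_mapRingHom, map_X]
  ring

variable [Fintype n] [DecidableEq n] {q : A} {S : Set n}

lemma det_eq_one_of_map_constantCoeff_eq_one [IsDomain A] {Θ : Matrix n n A[X]}
    (hΘ : IsUnit Θ.det) (h : Θ.map constantCoeff = 1) : Θ.det = 1 := by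
  obtain ⟨r, -, hr⟩ := Polynomial.isUnit_iff.1 hΘ
  have hdet := RingHom.map_det constantCoeff Θ
  rw [RingHom.mapMatrix_apply, h, ← hr, det_one, constantCoeff_apply, coeff_C_zero] at hdet
  rw [← hr, hdet, C_1]

lemma IsRelParabolic.exists_eq_one_add {B : Type*} [CommRing B] (f : A →+* B)
    {Θ : Matrix n n B[X]} (hΘ : IsRelParabolic (C (f q)) S Θ) (hΘ₁ : Θ.map constantCoeff = 1)
    (i j : n) :
    ∃ (w : A) (W : B[X]), W.coeff 0 = 0 ∧ Θ i j = (1 : Matrix n n B[X]) i j + C (f w) * W ∧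
      (i ∉ S → j ∈ S → w = q) := by
  have hcoeff : (Θ i j - (1 : Matrix n n B[X]) i j).coeff 0 = 0 := by
    have hij : (Θ i j).coeff 0 = (1 : Matrix n n B) i j := congrFun₂ hΘ₁ i j
    rw [coeff_sub, hij, sub_eq_zero]
    by_cases h : i = j <;> simp [one_apply, h]
  by_cases hij : i ∉ S ∧ j ∈ S
  · have hne : i ≠ j := fun h => hij.1 (h ▸ hij.2)
    rw [one_apply_ne hne] at hcoeff ⊢
    rw [sub_zero] at hcoeff
    obtain ⟨W, hW, hΘW⟩ :=
      exists_eq_C_mul_of_coeff_zero_eq_zero hcoeff (hΘ.dvd i hij.1 j hij.2)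
    exact ⟨q, W, hW, by rw [hΘW, zero_add], fun _ _ => rfl⟩
  · exact ⟨1, _, hcoeff, by simp, fun hi hj => (hij ⟨hi, hj⟩).elim⟩

lemma exists_isRelParabolic_map_eq_map_dilate [IsDomain A] {B : Type*} [CommRing B] [IsDomain B]
    [Algebra A B] {M : Submonoid A} [IsLocalization M B] (hM : M ≤ nonZeroDivisors A)
    {Θ : Matrix n n B[X][X]} (hΘ : IsRelParabolic (C (C (algebraMap A B q))) S Θ)
    (hΘ₁ : Θ.map constantCoeff = 1) :
    ∃ s ∈ M, ∃ Θ₀ : Matrix n n A[X][X], IsRelParabolic (C (C q)) S Θ₀ ∧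
      Θ₀.map (mapRingHom (mapRingHom (algebraMap A B))) = Θ.map (dilate (algebraMap A B s)) := by
  let φ := algebraMap A B
  let Φ := mapRingHom (mapRingHom φ)
  have hΦ : Function.Injective Φ :=
    map_injective _ (map_injective _ (IsLocalization.injective B hM))
  choose w W hW hΘW hw using hΘ.exists_eq_one_add (C.comp φ) hΘ₁
  obtain ⟨s, hs, hsW⟩ := exists_map_eq_dilate M (f := fun x : n × n => W x.1 x.2)
    fun x => hW x.1 x.2
  choose g hg using hsW
  let Θ₀ : Matrix n n A[X][X] := 1 + of fun i j => C (C (w i j)) * g (i, j)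
  have hΘ₀ : Θ₀.map Φ = Θ.map (dilate (φ s)) := by
    ext1 i j
    have hΦg : Φ (C (C (w i j)) * g (i, j)) = dilate (φ s) (C (C (φ (w i j))) * W i j) := by
      rw [map_mul, map_mul, hg, dilate_C, coe_mapRingHom, map_C, coe_mapRingHom, map_C]
    have hone : Φ ((1 : Matrix n n A[X][X]) i j) =
        dilate (φ s) ((1 : Matrix n n B[X][X]) i j) := by
      by_cases h : i = j <;> simp [one_apply, h]
    change Φ ((1 : Matrix n n A[X][X]) i j + C (C (w i j)) * g (i, j)) = dilate (φ s) (Θ i j)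
    rw [map_add, hΦg, hone, ← map_add, hΘW i j]
    rfl
  refine ⟨s, hs, Θ₀, ⟨?_, fun i hi j hj => ?_⟩, hΘ₀⟩
  · have hdet : Θ₀.det = 1 := by
      apply hΦ
      rw [RingHom.map_det, RingHom.mapMatrix_apply, hΘ₀, ← RingHom.mapMatrix_apply,
        ← RingHom.map_det, det_eq_one_of_map_constantCoeff_eq_one hΘ.isUnit_det hΘ₁, map_one,
        map_one]
    exact hdet ▸ isUnit_one
  · simp [Θ₀, hw i j hi hj, one_apply_ne (show i ≠ j by rintro rfl; exact hi hj)]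

/-- Quillen's patching ideal of the row `u`: the elements `a` such that the substitution
`x ↦ x + a y` is realised on `u` by a relatively parabolic matrix. -/
def quillenIdeal (q : A) (S : Set n) (u : n → A[X]) : Ideal A where
  carrier := {a | ∃ Θ : Matrix n n A[X][X], IsRelParabolic (C (C q)) S Θ ∧
    (C ∘ u) ᵥ* Θ = shift a ∘ u}
  zero_mem' := ⟨1, ⟨by simp, fun i hi j hj => by
    simp [one_apply_ne (show i ≠ j by rintro rfl; exact hi hj)]⟩, by simp [shift_zero]⟩
  add_mem' := by
    rintro a b ⟨Θ, hΘ, hΘa⟩ ⟨Θ', hΘ', hΘb⟩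
    let τ : A[X][X] →+* A[X][X] := eval₂RingHom (shift b) X
    have hτC : τ ∘ C = shift b := funext fun f => eval₂_C (shift b) X
    have hτq : τ (C (C q)) = C (C q) := (congrFun hτC (C q)).trans (shift_C b q)
    refine ⟨Θ' * Θ.map τ, hΘ'.mul (hτq ▸ hΘ.map τ), ?_⟩
    calc (C ∘ u) ᵥ* (Θ' * Θ.map τ) = (τ ∘ C ∘ u) ᵥ* Θ.map τ := by
          rw [← vecMul_vecMul, hΘb, ← hτC, Function.comp_assoc]
      _ = τ ∘ shift a ∘ u := by rw [← comp_vecMul, hΘa]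
      _ = shift (a + b) ∘ u := by
        rw [← eval₂RingHom_shift_comp_shift, RingHom.coe_comp, Function.comp_assoc]
  smul_mem' := by
    rintro c a ⟨Θ, hΘ, hΘa⟩
    refine ⟨Θ.map (dilate c), dilate_C c (C q) ▸ hΘ.map (dilate c), ?_⟩
    have hC : dilate c ∘ C = C := funext (dilate_C c)
    rw [smul_eq_mul, ← dilate_comp_shift, RingHom.coe_comp, Function.comp_assoc, ← hΘa,
      comp_vecMul, ← Function.comp_assoc, hC]

lemma Completable.exists_vecMul_eq_shift {i₀ : n} {u : n → A[X]} (hu : Completable (C q) S i₀ u) :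
    ∃ Θ : Matrix n n A[X][X], IsRelParabolic (C (C q)) S Θ ∧ Θ.map constantCoeff = 1 ∧
      (C ∘ u) ᵥ* Θ = shift 1 ∘ u := by
  obtain ⟨G, hG, rfl⟩ := hu
  have hGC := hG.map (C : A[X] →+* A[X][X])
  refine ⟨(G.map C)⁻¹ * G.map (shift 1), hGC.inv.mul (shift_C 1 q ▸ hG.map (shift 1)), ?_, ?_⟩
  · have hCC : (G.map (C : A[X] →+* A[X][X])).map constantCoeff = G := by
      ext1 i j
      simp
    have hshift : (G.map (shift 1)).map constantCoeff = G := by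
      ext1 i j
      exact RingHom.congr_fun (constantCoeff_comp_shift 1) (G i j)
    rw [Matrix.map_mul, hshift]
    nth_rw 2 [← hCC]
    rw [← Matrix.map_mul, nonsing_inv_mul _ hGC.isUnit_det,
      Matrix.map_one _ (map_zero _) (map_one _)]
  · have hrow : (C : A[X] →+* A[X][X]) ∘ G i₀ = G.map C i₀ := rfl
    rw [hrow, ← mul_apply_eq_vecMul, mul_nonsing_inv_cancel_left _ _ hGC.isUnit_det]
    rfl

lemma exists_notMem_mem_quillenIdeal [IsDomain A] (m : Ideal A) [m.IsPrime] (B : Type*) [CommRing B]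
    [IsDomain B] [Algebra A B] [IsLocalization.AtPrime B m] {i₀ : n} {u : n → A[X]}
    (hu : Completable (C (algebraMap A B q)) S i₀ (mapRingHom (algebraMap A B) ∘ u)) :
    ∃ s ∉ m, s ∈ quillenIdeal q S u := by
  obtain ⟨Θ, hΘ, hΘ₁, hΘu⟩ := hu.exists_vecMul_eq_shift
  obtain ⟨s, hs, Θ₀, hΘ₀, hmap⟩ :=
    exists_isRelParabolic_map_eq_map_dilate m.primeCompl_le_nonZeroDivisors hΘ hΘ₁
  refine ⟨s, hs, Θ₀, hΘ₀, ?_⟩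
  let φ := algebraMap A B
  let Φ := mapRingHom (mapRingHom φ)
  have hΦ : Function.Injective Φ := map_injective _ (map_injective _
    (IsLocalization.injective B m.primeCompl_le_nonZeroDivisors))
  have hC : Φ ∘ C ∘ u = dilate (φ s) ∘ C ∘ mapRingHom φ ∘ u := by
    ext1 j
    simp [Φ, dilate_C]
  apply hΦ.comp_left
  calc Φ ∘ ((C ∘ u) ᵥ* Θ₀) = dilate (φ s) ∘ ((C ∘ mapRingHom φ ∘ u) ᵥ* Θ) := by
        rw [comp_vecMul, comp_vecMul, hmap, hC]
    _ = (dilate (φ s)).comp (shift 1) ∘ mapRingHom φ ∘ u := by rw [hΘu]; rfl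
    _ = (shift (φ s)).comp (mapRingHom φ) ∘ u := by rw [dilate_comp_shift, mul_one]; rfl
    _ = Φ ∘ shift s ∘ u := by rw [← mapRingHom_comp_shift]; rfl

theorem completable_of_forall_isMaximal [IsDomain A] {i₀ : n} {u : n → A[X]}
    (hloc : ∀ (m : Ideal A) [m.IsMaximal],
      Completable (C (algebraMap A (Localization.AtPrime m) q)) S i₀
        (mapRingHom (algebraMap A (Localization.AtPrime m)) ∘ u))
    (h0 : Completable q S i₀ (evalRingHom 0 ∘ u)) : Completable (C q) S i₀ u := by
  have htop : quillenIdeal q S u = ⊤ := by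
    by_contra h
    obtain ⟨m, hm, hle⟩ := Ideal.exists_le_maximal _ h
    obtain ⟨s, hs, hsu⟩ := exists_notMem_mem_quillenIdeal m (Localization.AtPrime m) (hloc m)
    exact hs (hle hsu)
  obtain ⟨Θ, hΘ, hΘu⟩ := (Ideal.eq_top_iff_one _).1 htop
  let ψ : A[X][X] →+* A[X] := eval₂RingHom (C.comp (evalRingHom 0)) X
  have hψC : ψ ∘ C ∘ u = C ∘ evalRingHom 0 ∘ u := by
    ext1 j
    simp [ψ]
  have hψs : ψ.comp (shift 1) = RingHom.id _ := by
    apply Polynomial.ringHom_ext <;> simp [ψ, shift]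
  have hψq : ψ (C (C q)) = C q := by simp [ψ]
  have hu : (C ∘ evalRingHom 0 ∘ u) ᵥ* Θ.map ψ = u := by
    rw [← hψC, ← comp_vecMul, hΘu, ← Function.comp_assoc, ← RingHom.coe_comp, hψs]
    rfl
  exact hu ▸ (h0.map C).vecMul (hψq ▸ hΘ.map ψ)

end Patching

section QuillenSuslin

lemma exists_comp_eq_algebraMap_comp_mapRingHom {σ R B : Type*} [CommRing R] [CommRing B]
    (φ : MvPolynomial σ R →+* B) :
    ∃ (α : Polynomial (MvPolynomial σ R) →+* MvPolynomial σ (Localization (monics R)))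
      (β : MvPolynomial σ (Localization (monics R)) →+* Localization (monics B)),
      β.comp α = (algebraMap (Polynomial B) (Localization (monics B))).comp
        (Polynomial.mapRingHom φ) ∧
      ∀ r, α (Polynomial.C (MvPolynomial.C r)) =
        MvPolynomial.C (algebraMap (Polynomial R) (Localization (monics R)) (Polynomial.C r)) := by
  let ψ := algebraMap (Polynomial R) (Localization (monics R))
  let χ := algebraMap (Polynomial B) (Localization (monics B))
  let α : Polynomial (MvPolynomial σ R) →+* MvPolynomial σ (Localization (monics R)) :=
    Polynomial.eval₂RingHom (MvPolynomial.map (ψ.comp Polynomial.C))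
      (MvPolynomial.C (ψ Polynomial.X))
  let β₀ : Localization (monics R) →+* Localization (monics B) :=
    IsLocalization.lift (M := monics R)
      (g := χ.comp (Polynomial.mapRingHom (φ.comp MvPolynomial.C))) fun f =>
        isUnit_algebraMap_of_monic (Polynomial.Monic.map _ f.2)
  have hβ₀ (f : Polynomial R) : β₀ (ψ f) = χ (f.map (φ.comp MvPolynomial.C)) :=
    IsLocalization.lift_eq _ f
  let β : MvPolynomial σ (Localization (monics R)) →+* Localization (monics B) :=
    MvPolynomial.eval₂Hom β₀ fun i => χ (Polynomial.C (φ (MvPolynomial.X i)))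
  refine ⟨α, β, ?_, fun r => by simp [α, ψ]⟩
  refine Polynomial.ringHom_ext' (MvPolynomial.ringHom_ext (fun r => ?_) fun i => ?_) ?_
  · simp [α, β, hβ₀, χ]
  · simp [α, β, χ]
  · simp [α, β, hβ₀, χ]

variable {n : Type*} [Fintype n] [DecidableEq n] {S : Set n} {i₀ : n}

lemma completable_map_of_isLocalRing {σ R B : Type*} [CommRing R] [CommRing B] [IsDomain B]
    [IsLocalRing B] (φ : MvPolynomial σ R →+* B) (hi₀ : i₀ ∈ S) {q : R}
    {u : n → Polynomial (MvPolynomial σ R)}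
    (hu : RelUnimodular (Polynomial.C (MvPolynomial.C q)) S u)
    (h : ∀ (q' : Localization (monics R)) (w : n → MvPolynomial σ (Localization (monics R))),
      RelUnimodular (MvPolynomial.C q') S w → Completable (MvPolynomial.C q') S i₀ w) :
    Completable (Polynomial.C (φ (MvPolynomial.C q))) S i₀ (Polynomial.mapRingHom φ ∘ u) := by
  obtain ⟨α, β, hβα, hα⟩ := exists_comp_eq_algebraMap_comp_mapRingHom φ
  have hφq : Polynomial.mapRingHom φ (Polynomial.C (MvPolynomial.C q)) =
    Polynomial.C (φ (MvPolynomial.C q)) := Polynomial.map_C _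
  refine RelUnimodular.completable_of_isLocalRing hi₀ (hφq ▸ hu.map (Polynomial.mapRingHom φ)) ?_
  have hαu := hu.map (A' := MvPolynomial σ (Localization (monics R))) α
  rw [hα] at hαu
  have hβ := (h _ _ hαu).map β
  rwa [← hα, ← RingHom.comp_apply, hβα, ← Function.comp_assoc, ← RingHom.coe_comp, hβα,
    RingHom.comp_apply, hφq, RingHom.coe_comp, Function.comp_assoc] at hβ

lemma completable_comp_ringEquiv_iff {A B : Type*} [CommRing A] [CommRing B] (E : A ≃+* B) {q : A}
    {u : n → A} : Completable (E q) S i₀ (E ∘ u) ↔ Completable q S i₀ u := by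
  refine ⟨fun h => ?_, fun h => h.map E.toRingHom⟩
  have hu : E.symm ∘ E ∘ u = u := funext fun j => E.symm_apply_apply (u j)
  simpa [hu] using h.map E.symm.toRingHom

theorem RelUnimodular.completable_mvPolynomial {R : Type*} [CommRing R] [IsDomain R]
    [IsPrincipalIdealRing R] {k : ℕ} {q : R} {u : n → MvPolynomial (Fin k) R}
    (hu : RelUnimodular (MvPolynomial.C q) S u) (hi₀ : i₀ ∈ S) :
    Completable (MvPolynomial.C q) S i₀ u := by
  induction k generalizing R with
  | zero =>
    have := IsPrincipalIdealRing.of_surjective (MvPolynomial.isEmptyAlgEquiv R (Fin 0)).symm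
      (MvPolynomial.isEmptyAlgEquiv R (Fin 0)).symm.surjective
    exact hu.completable_of_isPrincipalIdealRing hi₀
  | succ k ih =>
    let E := (MvPolynomial.finSuccEquiv R k).toRingEquiv
    have hEq : E (MvPolynomial.C q) = Polynomial.C (MvPolynomial.C q) :=
      ((RingEquiv.symm_apply_eq E).1
        (RingHom.congr_fun (MvPolynomial.finSuccEquiv_comp_C_eq_C (R := R) k) q)).symm
    have hu' : RelUnimodular (Polynomial.C (MvPolynomial.C q)) S (E ∘ u) :=
      hEq ▸ hu.map E.toRingHom
    rw [← completable_comp_ringEquiv_iff E, hEq]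
    refine completable_of_forall_isMaximal (fun m hm => ?_) (ih ?_)
    · exact completable_map_of_isLocalRing _ hi₀ hu' fun q' w hw => ih hw
    · simpa using hu'.map (Polynomial.evalRingHom 0)

end QuillenSuslin

section RelHermite

variable {A m n : Type*} [CommRing A] [Fintype n] [DecidableEq n] {q : A}

/-- The relative form of the Hermite property of a ring: rows satisfying `RelUnimodular q S` extend
to matrices satisfying `IsRelParabolic q S`. Index sets `Fin l` suffice for all finite ones, see
`IsRelHermite.completable`. -/
def IsRelHermite (q : A) : Prop :=
  ∀ ⦃l : ℕ⦄ ⦃S : Set (Fin l)⦄ ⦃u : Fin l → A⦄, RelUnimodular q S u →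
    ∀ i₀ ∈ S, Completable q S i₀ u

lemma isRelHermite_mvPolynomial_C {R : Type*} [CommRing R] [IsDomain R] [IsPrincipalIdealRing R]
    (k : ℕ) (a : R) : IsRelHermite (MvPolynomial.C a : MvPolynomial (Fin k) R) :=
  fun _ _ _ hu _ hi₀ => hu.completable_mvPolynomial hi₀

namespace IsRelHermite

lemma of_ringEquiv {B : Type*} [CommRing B] (E : A ≃+* B) (h : IsRelHermite (E q)) :
    IsRelHermite q :=
  fun _ _ _ hu i₀ hi₀ => (completable_comp_ringEquiv_iff E).1 (h (hu.map E.toRingHom) i₀ hi₀)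

lemma completable (h : IsRelHermite q) {S : Set n} {i₀ : n} (hi₀ : i₀ ∈ S) {u : n → A}
    (hu : RelUnimodular q S u) : Completable q S i₀ u := by
  let e := (Fintype.equivFin n).symm
  rw [← e.apply_symm_apply i₀] at hi₀ ⊢
  exact completable_comp_equiv.1 (h (hu.comp_equiv e) _ hi₀)

lemma exists_isRelParabolic_row_eq (h : IsRelHermite q) {S T : Set n} (hTS : T ⊆ S) {i₀ : n}
    (hi₀ : i₀ ∈ S \ T) {u v : n → A} (hv : ∀ j ∉ S, q ∣ v j) (hvT : ∀ j ∈ T, v j = 0)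
    (huv : u ⬝ᵥ v = 1) :
    ∃ G, IsRelParabolic q S G ∧ G i₀ = u ∧ ∀ t ∈ T, G t = Pi.single t 1 := by
  classical
  have hu' : RelUnimodular q ((↑) ⁻¹' S) fun j : {j // j ∉ T} => u j := by
    refine ⟨fun j => v j, fun j hj => hv j hj, ?_⟩
    rw [← huv, dotProduct, dotProduct, ← Fintype.sum_subtype_add_sum_subtype (· ∈ T),
      Fintype.sum_eq_zero (fun j : {j // j ∈ T} => u j * v j) fun j => by simp [hvT], zero_add]
  obtain ⟨G, hG, hGu⟩ := h.completable (i₀ := ⟨i₀, hi₀.2⟩) hi₀.1 hu'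
  let H : Matrix n n A := of fun i j =>
    if hi : i ∈ T then (Pi.single i 1 : n → A) j
    else if hj : j ∈ T then (if i = i₀ then u j else 0) else G ⟨i, hi⟩ ⟨j, hj⟩
  refine ⟨H, ⟨?_, fun i hi j hj => ?_⟩, ?_, fun t ht => ?_⟩
  · have hT : H.toSquareBlockProp (· ∈ T) = 1 := by
      ext i j
      simp [H, toSquareBlockProp_def, one_apply, Pi.single_apply, Subtype.ext_iff, eq_comm]
    have hT' : H.toSquareBlockProp (fun i => i ∉ T) = G := by
      ext i j
      simp [H, toSquareBlockProp_def, i.2, j.2]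
    rw [twoBlockTriangular_det' H (· ∈ T), hT, hT', det_one, one_mul]
    · exact hG.isUnit_det
    · intro i hi j hj
      have hij : j ≠ i := fun hij => hj (hij ▸ hi)
      simp [H, hi, hij]
  · have hiT : i ∉ T := fun hiT => hi (hTS hiT)
    have hne : i ≠ i₀ := fun h => hi (h ▸ hi₀.1)
    by_cases hjT : j ∈ T
    · simp [H, hiT, hjT, hne]
    · simpa [H, hiT, hjT] using hG.dvd ⟨i, hiT⟩ hi ⟨j, hjT⟩ hj
  · ext j
    by_cases hjT : j ∈ T
    · simp [H, hi₀.2, hjT]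
    · simpa [H, hi₀.2, hjT] using congrFun hGu ⟨j, hjT⟩
  · ext j
    simp [H, ht]

lemma exists_isRelParabolic_mul_row_eq (h : IsRelHermite q) [DecidableEq m] {S : Set n}
    {ι : m → n} (hι : Function.Injective ι) (hιS : ∀ i, ι i ∈ S) {U : Matrix m n A}
    {V : Matrix n m A} (hV : ∀ i ∉ S, ∀ j, q ∣ V i j) (hUV : U * V = 1) (T : Finset m) :
    ∃ F, IsRelParabolic q S F ∧ ∀ i ∈ T, (U * F) i = Pi.single (ι i) 1 := by
  induction T using Finset.induction_on with
  | empty => exact ⟨1, .one, by simp⟩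
  | insert i₀ T hi₀ ih =>
    obtain ⟨F, hF, hFT⟩ := ih
    have hW : U * F * (F⁻¹ * V) = 1 := by
      rw [Matrix.mul_assoc, ← Matrix.mul_assoc F, mul_nonsing_inv F hF.isUnit_det, Matrix.one_mul,
        hUV]
    have hWq : ∀ i ∉ S, q ∣ (F⁻¹ * V) i i₀ := fun i hi => by
      refine Finset.dvd_sum fun j _ => ?_
      by_cases hj : j ∈ S
      · exact (hF.inv.dvd i hi j hj).mul_right _
      · exact (hV j hj i₀).mul_left _
    have hWT : ∀ t ∈ ι '' T, (F⁻¹ * V) t i₀ = 0 := by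
      rintro _ ⟨i, hi, rfl⟩
      have hWi := congrFun (congrFun hW i) i₀
      rwa [mul_apply_eq_vecMul, hFT i hi, single_one_vecMul,
        one_apply_ne (ne_of_mem_of_not_mem hi hi₀)] at hWi
    obtain ⟨G, hG, hG₀, hGT⟩ := h.exists_isRelParabolic_row_eq (T := ι '' T) (i₀ := ι i₀)
      (Set.image_subset_iff.2 fun i _ => hιS i)
      ⟨hιS i₀, fun ⟨i, hi, hii⟩ => hi₀ (hι hii ▸ hi)⟩ hWq hWT
      ((congrFun (congrFun hW i₀) i₀).trans (one_apply_eq i₀))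
    have hFG : ∀ i ∈ insert i₀ T, (U * F) i = G (ι i) := by
      intro i hi
      rcases Finset.mem_insert.1 hi with rfl | hi
      · exact hG₀.symm
      · rw [hFT i hi, hGT _ ⟨i, hi, rfl⟩]
    refine ⟨F * G⁻¹, hF.mul hG.inv, fun i hi => ?_⟩
    rw [← Matrix.mul_assoc, mul_apply_eq_vecMul, hFG i hi, ← mul_apply_eq_vecMul,
      mul_nonsing_inv G hG.isUnit_det]
    ext j
    simp [one_apply, Pi.single_apply, eq_comm]

end IsRelHermite

end RelHermite

section RightFactor

variable {A m n : Type*} [CommRing A] [Fintype n] [DecidableEq m]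

/-- The scalars `t` for which `t • 1` is a right multiple of the matrix `M`. -/
def rightFactorIdeal (M : Matrix m n A) : Ideal A where
  carrier := {t | ∃ V : Matrix n m A, M * V = t • 1}
  zero_mem' := ⟨0, by simp⟩
  add_mem' := by
    rintro a b ⟨V, hV⟩ ⟨W, hW⟩
    exact ⟨V + W, by rw [Matrix.mul_add, hV, hW, add_smul]⟩
  smul_mem' := by
    rintro c a ⟨V, hV⟩
    exact ⟨c • V, by rw [Matrix.mul_smul, hV, smul_eq_mul, mul_smul]⟩

lemma one_mem_rightFactorIdeal_iff {M : Matrix m n A} :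
    1 ∈ rightFactorIdeal M ↔ ∃ V : Matrix n m A, M * V = 1 := by
  change (∃ V : Matrix n m A, M * V = (1 : A) • 1) ↔ _
  simp only [one_smul]

lemma det_submatrix_mem_rightFactorIdeal [Fintype m] (M : Matrix m n A) (g : m → n) :
    (M.submatrix id g).det ∈ rightFactorIdeal M := by
  classical
  refine ⟨(1 : Matrix n n A).submatrix id g * (M.submatrix id g).adjugate, ?_⟩
  rw [← mul_adjugate, ← Matrix.mul_assoc]
  congr 1
  simpa using (submatrix_mul M 1 id id g Function.bijective_id).symm

lemma mem_rightFactorIdeal_of_forall_dvd [DecidableEq n] {U : Matrix n n A}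
    (hU : IsUnit U.det) {c : n → A} {q : A} (hc : ∀ i, c i ∣ q) {f : m → n}
    (hf : Function.Injective f) :
    q ∈ rightFactorIdeal ((U * diagonal c).submatrix f id) := by
  choose c' hc' using hc
  have hq : U * diagonal c * (diagonal c' * U⁻¹) = q • 1 := by
    rw [Matrix.mul_assoc, ← Matrix.mul_assoc (diagonal c), diagonal_mul_diagonal]
    simp only [← hc', ← smul_one_eq_diagonal, smul_mul, Matrix.one_mul, Matrix.mul_smul,
      mul_nonsing_inv U hU]
  refine ⟨(diagonal c' * U⁻¹).submatrix id f, ?_⟩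
  rw [← submatrix_mul _ _ _ _ _ Function.bijective_id, hq, submatrix_smul, Pi.smul_apply,
    Pi.smul_apply, submatrix_one f hf]

end RightFactor

section Minors

variable {r l : ℕ}

lemma castLE_le_of_strictMono (hrl : r ≤ l) {f : Fin r → Fin l} (hf : StrictMono f) (i : Fin r) :
    Fin.castLE hrl i ≤ f i := by
  have := Finset.card_le_card_of_injOn (s := Finset.Iio i) (t := Finset.Iio (f i)) f
    (fun j hj => by simpa using hf (Finset.mem_Iio.1 hj)) hf.injective.injOn
  simpa [Fin.le_def] using this

lemma eq_castLE_of_strictMono (hrl : r ≤ l) {f : Fin r → Fin l} (hf : StrictMono f)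
    (hfr : ∀ i, (f i : ℕ) < r) : f = Fin.castLE hrl := by
  have hf' : StrictMono fun i => (f i).castLT (hfr i) := fun i j hij => hf hij
  funext i
  simpa [Fin.ext_iff] using congrFun hf'.eq_id i

variable {A : Type*} [CommRing A] [IsDomain A] {q : A} {a : ℕ → ℕ} {M : Matrix (Fin l) (Fin l) A}

lemma mem_rightFactorIdeal_of_mem_minorsSet (hq : q ≠ 0) (ha : Monotone a)
    (har : ∀ i < r, a i < a r) (hrl : r ≤ l)
    (hqM : q ∈ rightFactorIdeal (M.submatrix (Fin.castLE hrl) id)) {b : A}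
    (hb : q ^ (∑ i : Fin r, a i) * b ∈ minorsSet r (diagonal (fun i : Fin l => q ^ a i) * M)) :
    b ∈ rightFactorIdeal (M.submatrix (Fin.castLE hrl) id) := by
  obtain ⟨f, g, hf, -, hb⟩ := hb
  have hle (i : Fin r) : a i ≤ a (f i) := ha (castLE_le_of_strictMono hrl hf i)
  have hdet : q ^ (∑ i : Fin r, a i) * b = q ^ (∑ i, a (f i)) * (M.submatrix f g).det := by
    rw [hb, ← Finset.prod_pow_eq_pow_sum, ← det_diagonal, ← det_mul]
    congr 1
    ext i j
    simp
  by_cases hfr : ∀ i, (f i : ℕ) < r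
  · obtain rfl := eq_castLE_of_strictMono hrl hf hfr
    rw [mul_left_cancel₀ (pow_ne_zero _ hq) hdet]
    exact det_submatrix_mem_rightFactorIdeal _ g
  · push Not at hfr
    obtain ⟨i, hi⟩ := hfr
    have hlt : ∑ i : Fin r, a i < ∑ i, a (f i) := Finset.sum_lt_sum (fun i _ => hle i)
      ⟨i, Finset.mem_univ i, (har i i.2).trans_le (ha hi)⟩
    refine Ideal.mem_of_dvd _ ?_ hqM
    rw [← mul_dvd_mul_iff_left (pow_ne_zero (∑ i : Fin r, a i) hq), hdet, ← pow_succ]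
    exact (pow_dvd_pow q hlt).mul_right _

lemma one_mem_rightFactorIdeal_of_span_eq_top (hq : q ≠ 0) (ha : Monotone a)
    (har : ∀ i < r, a i < a r) (hrl : r ≤ l)
    (hqM : q ∈ rightFactorIdeal (M.submatrix (Fin.castLE hrl) id))
    (hJ : Ideal.span {b | q ^ (∑ i : Fin r, a i) * b ∈
      minorsSet r (diagonal (fun i : Fin l => q ^ a i) * M)} = ⊤) :
    1 ∈ rightFactorIdeal (M.submatrix (Fin.castLE hrl) id) := by
  rw [← Ideal.eq_top_iff_one, eq_top_iff, ← hJ, Ideal.span_le]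
  exact fun b hb => mem_rightFactorIdeal_of_mem_minorsSet hq ha har hrl hqM hb

end Minors

section Diagonalisation

variable {A n : Type*} [CommRing A] [IsDomain A] [Fintype n] [DecidableEq n]

lemma exists_diagonal_mul_eq_mul_diagonal {d : n → A} (hd : ∀ i, d i ≠ 0) {M : Matrix n n A}
    (h : ∀ i j, d i ∣ M i j * d j) :
    ∃ N : Matrix n n A, N.det = M.det ∧ diagonal d * N = M * diagonal d := by
  choose N hN using h
  have hNM : diagonal d * of N = M * diagonal d := by
    ext i j
    rw [diagonal_mul, mul_diagonal, of_apply, hN]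
  refine ⟨of N, ?_, hNM⟩
  have hdet := congrArg det hNM
  rw [det_mul, det_mul, mul_comm M.det, det_diagonal] at hdet
  exact mul_left_cancel₀ (Finset.prod_ne_zero_iff.2 fun i _ => hd i) hdet

lemma exists_mul_diagonal_eq_diagonal_mul {d : n → A} (hd : ∀ i, d i ≠ 0) {M : Matrix n n A}
    (h : ∀ i j, d j ∣ d i * M i j) :
    ∃ N : Matrix n n A, N.det = M.det ∧ N * diagonal d = diagonal d * M := by
  obtain ⟨N, hN, hNM⟩ := exists_diagonal_mul_eq_mul_diagonal (M := Mᵀ) hd fun i j => by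
    rw [transpose_apply, mul_comm]
    exact h j i
  refine ⟨Nᵀ, by rw [det_transpose, hN, det_transpose], ?_⟩
  simpa using congrArg transpose hNM

lemma IsRelHermite.matrixEquiv_diagonal {m : Type*} [DecidableEq m] [Finite m] {q : A}
    (hH : IsRelHermite q) (hq : q ≠ 0) {l : ℕ} {S : Set (Fin l)} [DecidablePred (· ∈ S)]
    {ι : m → Fin l} (hι : Function.Injective ι) (hιS : ∀ i, ι i ∈ S)
    {d : Fin l → A} (hd : ∀ i, d i ≠ 0) (hdι : ∀ i ∉ Set.range ι, ∀ j, d j ∣ d i)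
    {U : Matrix (Fin l) (Fin l) A} (hU : IsUnit U.det)
    (h1 : 1 ∈ rightFactorIdeal ((U * diagonal fun i => if i ∈ S then 1 else q).submatrix ι id)) :
    MatrixEquiv (diagonal d * (U * diagonal fun i => if i ∈ S then 1 else q))
      (diagonal fun i => d i * if i ∈ S then 1 else q) := by
  have := Fintype.ofFinite m
  set c : Fin l → A := fun i => if i ∈ S then 1 else q
  obtain ⟨V, hV⟩ := one_mem_rightFactorIdeal_iff.1 h1
  obtain ⟨F, hF, hUF⟩ := hH.exists_isRelParabolic_mul_row_eq hι hιS (U := U.submatrix ι id)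
    (V := diagonal c * V) (fun i hi j => by simp [c, hi])
    (by rw [← Matrix.mul_assoc]; exact hV) Finset.univ
  obtain ⟨E, hE, hEU⟩ := exists_mul_diagonal_eq_diagonal_mul (M := U * F) hd fun i j => by
    by_cases hi : i ∈ Set.range ι
    · obtain ⟨i, rfl⟩ := hi
      have hrow : (U * F) (ι i) = Pi.single (ι i) 1 := hUF i (Finset.mem_univ i)
      rcases eq_or_ne j (ι i) with rfl | hj
      · exact dvd_mul_right _ _
      · simp [hrow, hj]
    · exact (hdι i hi j).mul_right _
  have hc₀ : ∀ i, c i ≠ 0 := fun i => by by_cases hi : i ∈ S <;> simp [c, hi, hq]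
  obtain ⟨G, hG, hGF⟩ := exists_diagonal_mul_eq_mul_diagonal (M := F⁻¹) hc₀ fun i j => by
    by_cases hi : i ∈ S
    · simp [c, hi]
    by_cases hj : j ∈ S
    · simpa [c, hi, hj] using hF.inv.dvd i hi j hj
    · simp [c, hi, hj]
  refine ⟨E, G, ?_, ?_, ?_⟩
  · rw [hE, det_mul]
    exact hU.mul hF.isUnit_det
  · rw [hG]
    exact hF.inv.isUnit_det
  · rw [← diagonal_mul_diagonal, ← Matrix.mul_assoc E, hEU, Matrix.mul_assoc _ _ G, hGF]
    simp only [Matrix.mul_assoc, mul_nonsing_inv_cancel_left F _ hF.isUnit_det]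

end Diagonalisation

section Exponents

/-- The sequence `e₀, …, e_{k-1}, s, s, …`. -/
def extendByConst {k : ℕ} (e : Fin k → ℕ) (s : ℕ) (i : ℕ) : ℕ :=
  if h : i < k then e ⟨i, h⟩ else s

variable {k : ℕ} {e : Fin k → ℕ} {s : ℕ}

lemma extendByConst_val (i : Fin k) : extendByConst e s i = e i :=
  dif_pos i.2

lemma extendByConst_of_le {i : ℕ} (hi : k ≤ i) : extendByConst e s i = s :=
  dif_neg hi.not_gt

lemma pow_extendByConst {M : Type*} [Monoid M] (q : M) (i : ℕ) :
    q ^ extendByConst e s i = if h : i < k then q ^ e ⟨i, h⟩ else q ^ s :=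
  apply_dite _ _ _ _

lemma pow_extendByConst_mul {M : Type*} [Monoid M] (q : M) (i : ℕ) :
    (q ^ extendByConst e s i * if i < k then 1 else q) =
      if h : i < k then q ^ e ⟨i, h⟩ else q ^ (s + 1) := by
  rw [pow_extendByConst]
  split_ifs
  exacts [mul_one _, (pow_succ q s).symm]

lemma extendByConst_le (hes : ∀ i, e i ≤ s) (i : ℕ) : extendByConst e s i ≤ s := by
  unfold extendByConst
  split_ifs
  exacts [hes _, le_rfl]

lemma monotone_extendByConst (he : Monotone e) (hes : ∀ i, e i ≤ s) :
    Monotone (extendByConst e s) := by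
  intro i j hij
  rcases lt_or_ge j k with hj | hj
  · simpa [extendByConst, hij.trans_lt hj, hj] using he hij
  · exact (extendByConst_le hes i).trans_eq (extendByConst_of_le hj).symm

lemma sum_extendByConst (i : Fin k) :
    ∑ j : Fin ((i : ℕ) + 1), extendByConst e s j = ∑ j ∈ Finset.Iic i, e j := by
  rw [Fin.sum_univ_eq_sum_range (extendByConst e s), Nat.range_succ_eq_Iic,
    ← Fin.map_valEmbedding_Iic, Finset.sum_map]
  exact Finset.sum_congr rfl fun j _ => extendByConst_val j

lemma exists_forall_lt_iff_of_monotone {a : ℕ → ℕ} (ha : Monotone a) (hk : s ≤ a k) :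
    ∃ r ≤ k, ∀ i, a i < s ↔ i < r := by
  classical
  have h : ∃ i, s ≤ a i := ⟨k, hk⟩
  refine ⟨Nat.find h, Nat.find_min' h hk, fun i => ?_⟩
  rw [Nat.lt_find_iff]
  exact ⟨fun hi j hj => ((ha hj).trans_lt hi).not_ge, fun hi => not_le.1 (hi i le_rfl)⟩

end Exponents

lemma exists_ringEquiv_polyImage_eq_C (K : Type*) [CommRing K] (n : ℕ) :
    ∃ E : MvPolynomial (Fin (n + 1)) K ≃+* MvPolynomial (Fin n) (Polynomial K),
      ∀ p, E (polyImage n p) = MvPolynomial.C p := by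
  let E := ((MvPolynomial.renameEquiv K (finSuccEquiv n)).trans
    (MvPolynomial.optionEquivRight K (Fin n))).toRingEquiv
  have hE : E.toRingHom.comp (Polynomial.aeval (MvPolynomial.X 0)).toRingHom = MvPolynomial.C :=
    Polynomial.ringHom_ext' (RingHom.ext fun x => by simp [E, MvPolynomial.algebraMap_eq])
      (by simp [E])
  exact ⟨E, RingHom.congr_fun hE⟩

theorem stmt5_general {R A : Type*} [CommRing R] [IsDomain R] [IsPrincipalIdealRing R]
    [CommRing A] {n l k : ℕ} (E : A ≃+* MvPolynomial (Fin n) R) {c : R} (hc : c ≠ 0)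
    {q : A} (hE : E q = MvPolynomial.C c) (hkl : k ≤ l) {e : Fin k → ℕ} (he : Monotone e)
    {s : ℕ} (hes : ∀ i, e i ≤ s) {U B : Matrix (Fin l) (Fin l) A} (hU : IsUnit U.det)
    (hB : B = diagonal (fun i : Fin l => if h : (i : ℕ) < k then q ^ e ⟨i, h⟩ else q ^ s) * U *
      diagonal (fun i : Fin l => if (i : ℕ) < k then 1 else q))
    (hJ : ∀ i : Fin k, Ideal.span {b : A |
      q ^ (∑ j ∈ Finset.Iic i, e j) * b ∈ minorsSet ((i : ℕ) + 1) B} = ⊤) :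
    MatrixEquiv B (diagonal fun i : Fin l =>
      if h : (i : ℕ) < k then q ^ e ⟨i, h⟩ else q ^ (s + 1)) := by
  have : IsDomain A := E.toMulEquiv.isDomain
  have hH : IsRelHermite q := .of_ringEquiv E (hE ▸ isRelHermite_mvPolynomial_C n c)
  have hq : q ≠ 0 := E.map_ne_zero_iff.1 (hE ▸ MvPolynomial.C_ne_zero.2 hc)
  have ha : Monotone (extendByConst e s) := monotone_extendByConst he hes
  obtain ⟨r, hrk, hr⟩ := exists_forall_lt_iff_of_monotone ha (extendByConst_of_le le_rfl).ge
  have hrs {i : ℕ} (hi : r ≤ i) : extendByConst e s i = s :=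
    (extendByConst_le hes i).antisymm (not_lt.1 fun h => hi.not_gt ((hr i).1 h))
  simp only [← pow_extendByConst, Matrix.mul_assoc] at hB
  simp only [← pow_extendByConst_mul, hB]
  refine hH.matrixEquiv_diagonal (S := {i | (i : ℕ) < k}) hq (Fin.castLE_injective (hrk.trans hkl))
    (fun i => i.2.trans_le hrk) (fun i => pow_ne_zero _ hq) (fun i hi j => ?_) hU ?_
  · refine pow_dvd_pow q ((extendByConst_le hes j).trans (hrs ?_).ge)
    exact not_lt.1 fun h => hi ⟨⟨i, h⟩, rfl⟩
  · cases r with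
    | zero => exact one_mem_rightFactorIdeal_iff.2 ⟨0, Subsingleton.elim _ _⟩
    | succ r =>
      refine one_mem_rightFactorIdeal_of_span_eq_top hq ha
        (fun i hi => ((hr i).2 hi).trans_eq (hrs le_rfl).symm) _
        (mem_rightFactorIdeal_of_forall_dvd hU (fun i => ?_) (Fin.castLE_injective _)) ?_
      · split_ifs
        exacts [one_dvd _, dvd_rfl]
      · rw [sum_extendByConst ⟨r, hrk⟩, ← hJ ⟨r, hrk⟩, hB]
        rfl

/-- let `B = diag(p^{s₁}, …, p^{s_k}, p^s, …, p^s) · U · diag(1, …, 1, p, …, p)`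
with `s₁ ≤ ⋯ ≤ s_k ≤ s`, `p ∈ K[x₁]` irreducible and `U ∈ GL_l(A)`.
If `d_i(B) = p^{s₁ + ⋯ + s_i}` (up to associates) and `J_i(B) = A` for `i = 1, …, k`,
then `B ∼ diag(p^{s₁}, …, p^{s_k}, p^{s+1}, …, p^{s+1})`. -/
theorem stmt5 {K : Type*} [Field K] {n l k : ℕ} (hkl : k ≤ l)
    (p : Polynomial K) (hp : Irreducible p)
    (e : Fin k → ℕ) (he : Monotone e) (sv : ℕ) (hes : ∀ i, e i ≤ sv)
    (U : Matrix (Fin l) (Fin l) (MvPolynomial (Fin (n + 1)) K)) (hU : IsUnit U.det)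
    (B : Matrix (Fin l) (Fin l) (MvPolynomial (Fin (n + 1)) K))
    (hB : B =
      Matrix.diagonal (fun i : Fin l => if h : (i : ℕ) < k
          then polyImage n p ^ e ⟨i, h⟩ else polyImage n p ^ sv) * U *
        Matrix.diagonal (fun i : Fin l => if (i : ℕ) < k then 1 else polyImage n p))
    (hd : ∀ i : Fin k,
      IsGcdOf (polyImage n p ^ (∑ j ∈ Finset.Iic i, e j)) (minorsSet ((i : ℕ) + 1) B))
    (hJ : ∀ i : Fin k,
      Ideal.span {b : MvPolynomial (Fin (n + 1)) K |
        polyImage n p ^ (∑ j ∈ Finset.Iic i, e j) * b ∈ minorsSet ((i : ℕ) + 1) B} = ⊤) :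
    MatrixEquiv B
      (Matrix.diagonal (fun i : Fin l => if h : (i : ℕ) < k
        then polyImage n p ^ e ⟨i, h⟩ else polyImage n p ^ (sv + 1))) := by
  obtain ⟨E, hE⟩ := exists_ringEquiv_polyImage_eq_C K n
  exact stmt5_general E hp.ne_zero (hE p) hkl he hes hU hB hJ
end

section
/- Let K be a field, A = K[x_1, ..., x_n], p ∈ K[x_1] an irreducible polynomial, Ā = (K[x_1]/⟨p⟩)[x_2, ..., x_n], and π : A → Ā the natural ring homomorphism; for a matrix F over A write F̄ for the entrywise image under π. Let F ∈ A^{2×2}. If rank(F̄) = 1 and the 1 × 1 reduced minors of F̄ generate the unit ideal of Ā (i.e. J_1(F̄) = Ā), then there exists U ∈ GL_2(A) such that U·F = diag(1, p)·G for some G ∈ A^{2×2}. -/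
/-- The natural ring homomorphism
`π : A = K[x₁, …, x_{n+1}] → Ā = (K[x₁]/⟨p⟩)[x₂, …, x_{n+1}]`,
sending `x₁` to the residue class of `x₁` and the other variables to themselves. -/
noncomputable def piBar {K : Type*} [Field K] (n : ℕ) (p : Polynomial K) :
    MvPolynomial (Fin (n + 1)) K →+*
      MvPolynomial (Fin n) (Polynomial K ⧸ Ideal.span {p}) :=
  (MvPolynomial.aeval (fun i : Fin (n + 1) =>
    Fin.cases (MvPolynomial.C (Ideal.Quotient.mk (Ideal.span {p}) Polynomial.X))
      (fun j => MvPolynomial.X j) i)).toRingHom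

/-!
Two by two matrices of determinant one lift modulo the ideal of `K[x₁, …, xₙ]` generated by an ideal
of `K[x₁]`, by induction on the number of variables. For one variable this is a statement about
Bezout domains. To lift a matrix `M` after adjoining a variable `X`, apply the induction hypothesis
over `K(X)` and clear denominators: this gives a monic `f ∈ K[X]` and a matrix `P ≡ f M` with
determinant a power of `f`. As in Horrocks' theorem, division by the monic polynomial `det P` and
Nakayama's lemma replace `P` by a matrix `V ≡ M` whose determinant is a constant `r ≡ 1`. Then
`V(rX) V(0)⁻¹` has determinant one, it is congruent to `M(X) M(0)⁻¹`, and `M(0)` lifts by induction.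

Over the unique factorization domain `Ā`, a rank one matrix with unimodular reduced entries is
`d • u vᵀ` with `u` unimodular, so a matrix of determinant one kills its second row. A lift of that
matrix to `A` makes the second row of `F` divisible by `p`.
-/

section

open Matrix Polynomial Matrix.SpecialLinearGroup

section Lifting

variable {ι : Type*} [Fintype ι] [DecidableEq ι] {R S : Type*} [CommRing R] [CommRing S]

/-- `LiftsSL ι J` says that every matrix of determinant one over `R ⧸ J`, with rows and columns
indexed by `ι`, is the reduction of a matrix of determinant one over `R`. -/
def LiftsSL (ι : Type*) [Fintype ι] [DecidableEq ι] {R : Type*} [CommRing R] (J : Ideal R) : Prop :=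
  Function.Surjective (SpecialLinearGroup.map (n := ι) (Ideal.Quotient.mk J))

theorem liftsSL_ker_iff {π : R →+* S} (hπ : Function.Surjective π) :
    LiftsSL ι (RingHom.ker π) ↔ Function.Surjective (SpecialLinearGroup.map (n := ι) π) := by
  let e := RingHom.quotientKerEquivOfSurjective hπ
  have map_e_bijective : Function.Bijective (SpecialLinearGroup.map (n := ι) e.toRingHom) := by
    refine Function.bijective_iff_has_inverse.2 ⟨SpecialLinearGroup.map e.symm.toRingHom, ?_, ?_⟩
    · exact fun V => Matrix.SpecialLinearGroup.ext _ _ fun i j => e.symm_apply_apply (V i j)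
    · exact fun V => Matrix.SpecialLinearGroup.ext _ _ fun i j => e.apply_symm_apply (V i j)
  exact (Function.Surjective.of_comp_iff' map_e_bijective _).symm

theorem LiftsSL.map_ringEquiv (e : R ≃+* S) {J : Ideal R} (hJ : LiftsSL ι J) :
    LiftsSL ι (J.map e) := by
  let π : S →+* R ⧸ J := (Ideal.Quotient.mk J).comp e.symm
  have hπ : Function.Surjective π := Ideal.Quotient.mk_surjective.comp e.symm.surjective
  have ker_π : RingHom.ker π = J.map e := by
    rw [← RingHom.comap_ker, Ideal.mk_ker]
    exact Ideal.comap_symm e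
  rw [← ker_π, liftsSL_ker_iff hπ]
  intro V
  obtain ⟨U, rfl⟩ := hJ V
  refine ⟨SpecialLinearGroup.map e U, Matrix.SpecialLinearGroup.ext _ _ fun i j => ?_⟩
  exact congrArg (Ideal.Quotient.mk J) (e.symm_apply_apply (U i j))

end Lifting

section Bezout

variable {R S : Type*} [CommRing R] [CommRing S]

theorem exists_map_eq_of_lower_left_eq_zero {π : R →+* S} (hπ : Function.Surjective π)
    {V : SpecialLinearGroup (Fin 2) S} (hV : V 1 0 = 0) :
    ∃ U, SpecialLinearGroup.map π U = V := by
  obtain ⟨a, ha⟩ := hπ (V 0 0)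
  obtain ⟨b, hb⟩ := hπ (V 0 1)
  obtain ⟨g, hg⟩ := hπ (V 1 1)
  have hV_diag : V 0 0 * V 1 1 = 1 := by
    have h := V.det_coe
    rwa [det_fin_two, hV, mul_zero, sub_zero] at h
  -- The lift rests on the identity `(1 + ε) * (1 - ε) + ε * ε = 1`, where `a * g = 1 + ε`.
  let ε := a * g - 1
  have hε : π ε = 0 := by rw [map_sub, map_mul, ha, hg, hV_diag, map_one, sub_self]
  let U : Matrix (Fin 2) (Fin 2) R := !![a * (1 - ε) + a * b * ε, a * b * g - ε; ε, g]
  have det_U : U.det = 1 := by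
    rw [det_fin_two_of]
    ring
  have map_U : U.map π = V := by
    have hV01 : V 0 0 * V 0 1 * V 1 1 = V 0 1 := by linear_combination V 0 1 * hV_diag
    rw [eta_fin_two V.1, eta_fin_two (U.map π)]
    simp [U, hε, ha, hb, hg, hV, hV01]
  exact ⟨⟨U, det_U⟩, Subtype.ext map_U⟩

theorem exists_eq_mul_and_isCoprime (R : Type*) [CommRing R] [IsDomain R] [IsBezout R] (c d : R) :
    ∃ g c' d', c = g * c' ∧ d = g * d' ∧ IsCoprime c' d' := by
  classical
  let := IsBezout.toGCDDomain R
  obtain ⟨c', d', hc, hd, h⟩ := extract_gcd c d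
  exact ⟨gcd c d, c', d', hc, hd, (gcd_isUnit_iff c' d').1 h⟩

theorem liftsSL_of_isBezout [IsDomain R] [IsBezout R] (J : Ideal R) : LiftsSL (Fin 2) J := by
  intro V
  obtain ⟨c, hc⟩ := Ideal.Quotient.mk_surjective (V 1 0)
  obtain ⟨d, hd⟩ := Ideal.Quotient.mk_surjective (V 1 1)
  obtain ⟨g, c', d', rfl, rfl, hcd⟩ := exists_eq_mul_and_isCoprime R c d
  obtain ⟨N, hN0, hN1⟩ := hcd.exists_SL2_row 1
  let N' := SpecialLinearGroup.map (Ideal.Quotient.mk J) N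
  have lower_left : (V * N'⁻¹) 1 0 = 0 := by
    rw [Matrix.SpecialLinearGroup.coe_mul, Matrix.SpecialLinearGroup.SL2_inv_expl,
      mul_apply, Fin.sum_univ_two]
    simp only [N', hN0, hN1, ← hc, ← hd, map_apply_coe, RingHom.mapMatrix_apply, map_apply,
      map_mul, cons_val', cons_val_zero, cons_val_one, cons_val_fin_one, mul_neg]
    ring
  obtain ⟨U, hU⟩ := exists_map_eq_of_lower_left_eq_zero Ideal.Quotient.mk_surjective lower_left
  exact ⟨U * N, by rw [map_mul, hU, inv_mul_cancel_right]⟩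

end Bezout

section MatrixSubmodule

variable {m n R M : Type*} [Finite m] [Finite n] [CommRing R] [AddCommGroup M] [Module R M]

theorem matrix_fg {N : Submodule R M} (hN : N.FG) : (N.matrix : Submodule R (Matrix m n M)).FG := by
  have h : (Submodule.pi Set.univ fun _ : m => Submodule.pi Set.univ fun _ : n => N).FG :=
    Submodule.fg_pi fun _ => Submodule.fg_pi fun _ => hN
  convert h.map (ofLinearEquiv R).toLinearMap using 1
  ext A
  simp only [Submodule.mem_map_equiv, Submodule.mem_pi]
  exact ⟨fun hA i _ j _ => hA i j, fun hA i j => hA i trivial j trivial⟩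

theorem smul_top_matrix (J : Ideal R) :
    (J • ⊤ : Submodule R (Matrix m n M)) = (J • ⊤ : Submodule R M).matrix := by
  classical
  cases nonempty_fintype m
  cases nonempty_fintype n
  refine le_antisymm (Submodule.smul_le.2 fun r hr A _ i j => ?_) fun A hA => ?_
  · exact Submodule.smul_mem_smul hr (Submodule.mem_top (x := A i j))
  · rw [matrix_eq_sum_single A]
    refine Submodule.sum_mem _ fun i _ => Submodule.sum_mem _ fun j _ => ?_
    have h := Submodule.mem_map_of_mem (f := singleLinearMap R i j) (hA i j)
    rw [Submodule.map_smul''] at h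
    exact Submodule.smul_mono le_rfl le_top h

end MatrixSubmodule

section Horrocks

variable {ι B : Type*} [Fintype ι] [DecidableEq ι] [CommRing B]

theorem mapMatrix_eq_zero_iff_mem_smul_top {J : Ideal B} {A : Matrix ι ι B[X]} :
    (mapRingHom (Ideal.Quotient.mk J)).mapMatrix A = 0 ↔
      A ∈ (J • ⊤ : Submodule B (Matrix ι ι B[X])) := by
  rw [smul_top_matrix, Ideal.smul_top_eq_map, ← Matrix.ext_iff]
  refine forall₂_congr fun i j => ?_
  change A i j ∈ RingHom.ker (mapRingHom (Ideal.Quotient.mk J)) ↔ A i j ∈ J.map C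
  rw [ker_mapRingHom, Ideal.mk_ker]

theorem mem_range_mulLeft_sup_degreeLT [Nontrivial B] {Q N E : Matrix ι ι B[X]} {g : B[X]}
    (hg : g.Monic) (hQN : Q * N = g • 1 + E) {J : Ideal B}
    (hE : E ∈ (J • ⊤ : Submodule B (Matrix ι ι B[X]))) (H : Matrix ι ι B[X]) :
    H ∈ LinearMap.range (LinearMap.mulLeft B Q) ⊔ (degreeLT B g.natDegree).matrix ⊔ J • ⊤ := by
  let q := H.map (· /ₘ g)
  let r := H.map (· %ₘ g)
  have hr : r ∈ (degreeLT B g.natDegree).matrix := fun i j =>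
    mem_degreeLT.2 ((degree_modByMonic_lt _ hg).trans_le degree_le_natDegree)
  have H_eq : H = Q * (N * q) + r - E * q := by
    have hrq : r + g • q = H := Matrix.ext fun i j => modByMonic_add_div (H i j) g
    rw [← mul_assoc, hQN, add_mul, smul_mul, one_mul, ← hrq]
    abel
  have hEq : E * q ∈ (J • ⊤ : Submodule B (Matrix ι ι B[X])) := by
    rw [← mapMatrix_eq_zero_iff_mem_smul_top] at hE ⊢
    rw [map_mul, hE, zero_mul]
  rw [H_eq]
  refine Submodule.sub_mem _ (Submodule.mem_sup_left ?_) (Submodule.mem_sup_right hEq)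
  exact Submodule.add_mem_sup ⟨N * q, rfl⟩ hr

open scoped Pointwise in
theorem exists_sub_one_mem_and_smul_le [Nontrivial B] {Q N M : Matrix ι ι B[X]} {f g : B[X]}
    (hf : f.Monic) (hg : g.Monic) (hQN : Q * N = f • 1) {J : Ideal B}
    (hQM : Q * M - g • 1 ∈ (J • ⊤ : Submodule B (Matrix ι ι B[X]))) :
    ∃ s, s - 1 ∈ J ∧ s • (⊤ : Submodule B (Matrix ι ι B[X])) ≤
      LinearMap.range (LinearMap.mulLeft B Q) ⊔ (degreeLT B g.natDegree).matrix := by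
  let W : Submodule B (Matrix ι ι B[X]) := (degreeLT B f.natDegree).matrix
  have W_fg : W.FG := by
    classical
    exact matrix_fg ⟨_, degreeLT_eq_span_X_pow.symm⟩
  have le_sup_W : ⊤ ≤ LinearMap.range (LinearMap.mulLeft B Q) ⊔ W := fun H _ => by
    simpa using mem_range_mulLeft_sup_degreeLT (J := ⊥) hf (hQN.trans (add_zero _).symm)
      (Submodule.zero_mem _) H
  refine Submodule.exists_sub_one_mem_and_smul_le_of_fg_of_le_sup W_fg le_top fun H _ => ?_
  have smul_top_le : J • (⊤ : Submodule B (Matrix ι ι B[X])) ≤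
      LinearMap.range (LinearMap.mulLeft B Q) ⊔ J • W := by
    refine (Submodule.smul_mono le_rfl le_sup_W).trans ?_
    rw [Submodule.smul_sup]
    exact sup_le_sup_right Submodule.smul_le_right _
  have hH := mem_range_mulLeft_sup_degreeLT hg (add_sub_cancel _ _).symm hQM H
  exact (sup_le (le_sup_left) (smul_top_le.trans <| sup_le_sup_right le_sup_left _)) hH

open scoped Pointwise in
theorem exists_congr_natDegree_mul_le [Nontrivial B] {Q N M : Matrix ι ι B[X]} {f g : B[X]}
    (hf : f.Monic) (hg : g.Monic) (hQN : Q * N = f • 1) {J : Ideal B}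
    (hQM : Q * M - g • 1 ∈ (J • ⊤ : Submodule B (Matrix ι ι B[X]))) :
    ∃ V : Matrix ι ι B[X], V - M ∈ (J • ⊤ : Submodule B (Matrix ι ι B[X])) ∧
      ∀ i j, ((Q * V) i j).natDegree ≤ g.natDegree := by
  obtain ⟨s, hs, s_smul_le⟩ := exists_sub_one_mem_and_smul_le hf hg hQN hQM
  have smul_mem : s • (Q * M - g • 1) ∈ J • LinearMap.range (LinearMap.mulLeft B Q) ⊔
      J • (degreeLT B g.natDegree).matrix := by
    have h := Submodule.mem_map_of_mem (f := DistribSMul.toLinearMap B _ s) hQM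
    rw [Submodule.map_smul''] at h
    rw [← Submodule.smul_sup]
    exact Submodule.smul_mono le_rfl s_smul_le h
  rw [← Submodule.map_top, ← Submodule.map_smul''] at smul_mem
  obtain ⟨_, ⟨A, hA, rfl⟩, T, hT, h_eq⟩ := Submodule.mem_sup.1 smul_mem
  refine ⟨s • M - A, ?_, fun i j => ?_⟩
  · have hM := Submodule.smul_mem_smul hs (Submodule.mem_top (x := M))
    convert Submodule.sub_mem _ hM hA using 1
    rw [sub_smul, one_smul]
    abel
  · have hT_deg : (T i j).natDegree ≤ g.natDegree :=
      natDegree_le_of_degree_le (mem_degreeLT.1 (Submodule.smul_le_right hT i j)).le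
    have hQV : Q * (s • M - A) = (s • g) • 1 + T := calc
      Q * (s • M - A) = s • (Q * M - g • 1) + s • g • 1 - Q * A := by
        rw [mul_sub, Matrix.mul_smul, smul_sub, sub_add_cancel]
      _ = (s • g) • 1 + T := by
        rw [← h_eq, LinearMap.mulLeft_apply, smul_assoc]
        abel
    have hg_deg : (((s • g) • 1 : Matrix ι ι B[X]) i j).natDegree ≤ g.natDegree := by
      rw [smul_one_eq_diagonal, diagonal_apply]
      split_ifs
      · exact natDegree_smul_le s g
      · simp
    rw [hQV]
    exact natDegree_add_le_of_degree_le hg_deg hT_deg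

theorem natDegree_det_le {A : Matrix ι ι B[X]} {d : ℕ} (hA : ∀ i j, (A i j).natDegree ≤ d) :
    A.det.natDegree ≤ Fintype.card ι * d := by
  rw [det_apply]
  refine natDegree_sum_le_of_forall_le _ _ fun σ _ => ?_
  refine (natDegree_smul_le _ _).trans <| (natDegree_prod_le _ _).trans ?_
  exact (Finset.sum_le_card_nsmul _ _ d fun i _ => hA _ _).trans_eq (by simp)

theorem exists_congr_det_eq_C [Nontrivial B] {Q N M : Matrix ι ι B[X]} {f g : B[X]}
    (hf : f.Monic) (hg : g.Monic) (hQN : Q * N = f • 1) {J : Ideal B}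
    (hQM : Q * M - g • 1 ∈ (J • ⊤ : Submodule B (Matrix ι ι B[X]))) (hQ : Q.det.Monic)
    (hQ_deg : Q.det.natDegree = Fintype.card ι * g.natDegree) :
    ∃ (V : Matrix ι ι B[X]) (r : B), V - M ∈ (J • ⊤ : Submodule B (Matrix ι ι B[X])) ∧
      V.det = C r := by
  obtain ⟨V, hVM, hQV_deg⟩ := exists_congr_natDegree_mul_le hf hg hQN hQM
  have natDegree_det_V : V.det.natDegree = 0 := by
    by_cases hV : V.det = 0
    · rw [hV, natDegree_zero]
    have h := natDegree_det_le hQV_deg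
    rw [det_mul, hQ.natDegree_mul' hV, hQ_deg] at h
    lia
  exact ⟨V, V.det.coeff 0, hVM, eq_C_of_natDegree_eq_zero natDegree_det_V⟩

theorem exists_map_eq_det_eq_C [Nontrivial B] {J : Ideal B} {M P : Matrix ι ι B[X]} {f : B[X]}
    (hM : ((mapRingHom (Ideal.Quotient.mk J)).mapMatrix M).det = 1) (hf : f.Monic)
    (hP : P.det = f ^ Fintype.card ι)
    (hPM : (mapRingHom (Ideal.Quotient.mk J)).mapMatrix P =
      (mapRingHom (Ideal.Quotient.mk J)).mapMatrix (f • M)) :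
    ∃ (V : Matrix ι ι B[X]) (r : B), V.det = C r ∧
      (mapRingHom (Ideal.Quotient.mk J)).mapMatrix V =
        (mapRingHom (Ideal.Quotient.mk J)).mapMatrix M := by
  let q := (mapRingHom (Ideal.Quotient.mk J)).mapMatrix (m := ι)
  have q_smul (a : B[X]) (A : Matrix ι ι B[X]) :
      q (a • A) = mapRingHom (Ideal.Quotient.mk J) a • q A :=
    Matrix.map_smul' _ _ _ (map_mul _)
  let g := f ^ (Fintype.card ι - 1)
  have hQM : P.adjugate * M - g • 1 ∈ (J • ⊤ : Submodule B (Matrix ι ι B[X])) := by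
    rw [← mapMatrix_eq_zero_iff_mem_smul_top, map_sub, sub_eq_zero]
    calc
      q (P.adjugate * M) = (q (f • M)).adjugate * q M := by
        rw [map_mul, RingHom.map_adjugate, ← hPM]
      _ = q (g • 1) := by
        rw [q_smul, adjugate_smul, smul_mul, adjugate_mul, hM, one_smul, q_smul, map_pow, map_one]
  have hQ : P.adjugate.det = g ^ Fintype.card ι := by rw [det_adjugate, hP, pow_right_comm]
  obtain ⟨V, r, hVM, hVr⟩ := exists_congr_det_eq_C (hf.pow _) (hf.pow _)
    ((adjugate_mul P).trans (by rw [hP])) hQM (hQ ▸ (hf.pow _).pow _)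
    (by rw [hQ, (hf.pow _).natDegree_pow])
  refine ⟨V, r, hVr, ?_⟩
  rwa [← sub_eq_zero, ← map_sub, mapMatrix_eq_zero_iff_mem_smul_top]

end Horrocks

section Rescaling

variable {ι B : Type*} [Fintype ι] [DecidableEq ι] [CommRing B]

theorem exists_mul_constantCoeff_eq_comp [IsDomain B] {V : Matrix ι ι B[X]} {r : B} (hr : r ≠ 0)
    (hV : V.det = C r) : ∃ U : SpecialLinearGroup ι B[X],
      U * (C.comp constantCoeff).mapMatrix V = (compRingHom (C r * X)).mapMatrix V := by
  let V₀ := (C.comp constantCoeff).mapMatrix V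
  let W := (compRingHom (C r * X)).mapMatrix (V.map divX)
  let U := 1 + (X : B[X]) • (W * V₀.adjugate)
  have det_V₀ : V₀.det = C r := by
    rw [← RingHom.map_det, hV]
    simp
  have U_mul_V₀ : U * V₀ = (compRingHom (C r * X)).mapMatrix V := calc
    U * V₀ = V₀ + (C r * X) • W := by
      rw [add_mul, one_mul, smul_mul, mul_assoc, adjugate_mul, det_V₀, Matrix.mul_smul, mul_one,
        smul_smul, mul_comm X]
    _ = (compRingHom (C r * X)).mapMatrix V := by
      ext1 i j
      conv_rhs => rw [RingHom.mapMatrix_apply, map_apply, ← divX_mul_X_add (V i j)]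
      simp [V₀, W]
      ring
  have det_U : U.det = 1 := by
    have h := congrArg det U_mul_V₀
    rw [det_mul, det_V₀, ← RingHom.map_det, hV, coe_compRingHom_apply, C_comp] at h
    exact mul_eq_right₀ (C_ne_zero.2 hr) |>.1 h
  exact ⟨⟨U, det_U⟩, U_mul_V₀⟩

theorem LiftsSL.exists_map_eq_of_det_eq_C [IsDomain B] {J : Ideal B} (hJ : LiftsSL ι J)
    {M : SpecialLinearGroup ι (B ⧸ J)[X]} {V : Matrix ι ι B[X]} {r : B} (hV : V.det = C r)
    (hVM : (mapRingHom (Ideal.Quotient.mk J)).mapMatrix V = M) :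
    ∃ U, SpecialLinearGroup.map (mapRingHom (Ideal.Quotient.mk J)) U = M := by
  let π := mapRingHom (Ideal.Quotient.mk J)
  rcases subsingleton_or_nontrivial (B ⧸ J) with _ | _
  · exact ⟨1, Subtype.ext (Subsingleton.elim _ _)⟩
  have hr : Ideal.Quotient.mk J r = 1 := by
    rw [← C_inj, map_one, ← M.det_coe, ← hVM, ← RingHom.map_det, hV, coe_mapRingHom,
      Polynomial.map_C]
  have hr0 : r ≠ 0 := by
    rintro rfl
    exact zero_ne_one ((map_zero _).symm.trans hr)
  obtain ⟨U, hU⟩ := exists_mul_constantCoeff_eq_comp hr0 hV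
  obtain ⟨N, hN⟩ := hJ (SpecialLinearGroup.map constantCoeff M)
  have map_N : π.mapMatrix (N.1.map C) = π.mapMatrix ((C.comp constantCoeff).mapMatrix V) := by
    ext1 i j
    have hN_ij : Ideal.Quotient.mk J (N i j) = (M i j).coeff 0 := by
      simpa using congrArg (fun A : SpecialLinearGroup ι (B ⧸ J) => A i j) hN
    simp [π, hN_ij, ← hVM]
  have map_comp : π.mapMatrix ((compRingHom (C r * X)).mapMatrix V) = π.mapMatrix V := by
    ext1 i j
    simp [π, Polynomial.map_comp, hr]
  refine ⟨U * SpecialLinearGroup.map C N, Subtype.ext ?_⟩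
  calc
    π.mapMatrix (U.1 * N.1.map C) = π.mapMatrix (U.1 * (C.comp constantCoeff).mapMatrix V) := by
      rw [map_mul, map_N, map_mul]
    _ = M := by rw [hU, map_comp, hVM]

theorem LiftsSL.polynomial [IsDomain B] {J : Ideal B} (hJ : LiftsSL ι J)
    (hloc : ∀ M : Matrix ι ι B[X], ((mapRingHom (Ideal.Quotient.mk J)).mapMatrix M).det = 1 →
      ∃ (f : B[X]) (P : Matrix ι ι B[X]), f.Monic ∧ P.det = f ^ Fintype.card ι ∧
        (mapRingHom (Ideal.Quotient.mk J)).mapMatrix P =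
          (mapRingHom (Ideal.Quotient.mk J)).mapMatrix (f • M)) :
    LiftsSL ι (J.map C) := by
  let π := mapRingHom (Ideal.Quotient.mk J)
  have hπ : Function.Surjective π := map_surjective _ Ideal.Quotient.mk_surjective
  rw [← Ideal.mk_ker (I := J), ← ker_mapRingHom, liftsSL_ker_iff hπ]
  intro M
  choose A hA using fun i j => hπ (M i j)
  replace hA : π.mapMatrix (of A) = M := Matrix.ext hA
  have det_A : (π.mapMatrix (of A)).det = 1 := hA ▸ M.det_coe
  obtain ⟨f, P, hf, hP, hPA⟩ := hloc (of A) det_A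
  obtain ⟨V, r, hV, hVA⟩ := exists_map_eq_det_eq_C det_A hf hP hPA
  exact hJ.exists_map_eq_of_det_eq_C hV (hVA.trans hA)

end Rescaling

section Localization

variable {ι R T S : Type*} [Fintype ι] [DecidableEq ι] [CommRing R] [CommRing T] [CommRing S]
  [Algebra R S]

theorem LiftsSL.exists_congr {J : Ideal R} (hJ : LiftsSL ι J) {M : Matrix ι ι R}
    (hM : M.det - 1 ∈ J) : ∃ U : SpecialLinearGroup ι R, ∀ i j, U i j - M i j ∈ J := by
  have det_map : ((Ideal.Quotient.mk J).mapMatrix M).det = 1 := by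
    rwa [← RingHom.map_det, ← map_one (Ideal.Quotient.mk J), Ideal.Quotient.eq]
  obtain ⟨U, hU⟩ := hJ ⟨_, det_map⟩
  refine ⟨U, fun i j => Ideal.Quotient.eq.1 ?_⟩
  exact congrArg (fun A : SpecialLinearGroup ι (R ⧸ J) => A i j) hU

theorem exists_common_denominator_s6 {κ : Type*} [Finite κ] (D : Submonoid R) [IsLocalization D S]
    {J : Ideal R} {x : κ → S} (hx : ∀ k, x k ∈ J.map (algebraMap R S)) :
    ∃ f ∈ D, ∀ k, ∃ a ∈ J, algebraMap R S f * x k = algebraMap R S a := by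
  cases nonempty_fintype κ
  choose y hy using fun k => (IsLocalization.mem_map_algebraMap_iff D S).1 (hx k)
  refine ⟨∏ k, (y k).2, prod_mem fun k _ => (y k).2.2, fun k => ?_⟩
  obtain ⟨c, hc⟩ := Finset.dvd_prod_of_mem (fun k => ((y k).2 : R)) (Finset.mem_univ k)
  refine ⟨c * (y k).1, J.mul_mem_left c (y k).1.2, ?_⟩
  rw [hc, map_mul, map_mul, ← hy k]
  ring

theorem exists_det_eq_pow_of_liftsSL_map {D : Submonoid R} (hD : D ≤ nonZeroDivisors R)
    [IsLocalization D S] {π : R →+* T} (hS : LiftsSL ι ((RingHom.ker π).map (algebraMap R S)))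
    {M : Matrix ι ι R} (hM : (π.mapMatrix M).det = 1) :
    ∃ f ∈ D, ∃ P : Matrix ι ι R, P.det = f ^ Fintype.card ι ∧
      π.mapMatrix P = π.mapMatrix (f • M) := by
  have hM_det : ((algebraMap R S).mapMatrix M).det - 1 ∈ (RingHom.ker π).map (algebraMap R S) := by
    rw [← RingHom.map_det, ← map_one (algebraMap R S), ← map_sub]
    refine Ideal.mem_map_of_mem _ ?_
    rw [RingHom.mem_ker, map_sub, map_one, RingHom.map_det, hM, sub_self]
  obtain ⟨U, hU⟩ := hS.exists_congr hM_det
  obtain ⟨f, hf, h⟩ := exists_common_denominator_s6 D (x := fun k : ι × ι => _) fun k => hU k.1 k.2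
  choose a ha h_eq using h
  let P : Matrix ι ι R := f • M + of fun i j => a (i, j)
  have map_P : (algebraMap R S).mapMatrix P = algebraMap R S f • U.1 := by
    ext1 i j
    simp only [P, RingHom.mapMatrix_apply, map_apply, Matrix.add_apply, Matrix.smul_apply,
      smul_eq_mul, of_apply, map_add, map_mul, ← h_eq]
    ring
  refine ⟨f, hf, P, IsLocalization.injective S hD ?_, ?_⟩
  · rw [RingHom.map_det, map_P, det_smul, U.det_coe, mul_one, map_pow]
  · rw [map_add, add_eq_left]
    exact Matrix.ext fun i j => ha (i, j)

end Localization

section Polynomial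

variable {τ K : Type*} [CommRing K]

/-- The ring isomorphism `K[τ][X] ≃ K[X][τ]` exchanging the variable `X` with the variables
in `τ`, used to localize `K[τ][X]` at the nonzero polynomials in `X` alone. -/
noncomputable def swapEquiv (τ K : Type*) [CommRing K] :
    (MvPolynomial τ K)[X] ≃+* MvPolynomial τ K[X] :=
  ((MvPolynomial.optionEquivLeft K τ).symm.trans (MvPolynomial.optionEquivRight K τ)).toRingEquiv

theorem swapEquiv_C (a : MvPolynomial τ K) : swapEquiv τ K (C a) = MvPolynomial.map C a := by
  have h : (swapEquiv τ K).toRingHom.comp C = MvPolynomial.map C := by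
    ext <;> simp [swapEquiv]
  exact DFunLike.congr_fun h a

theorem swapEquiv_symm_C (f : K[X]) :
    (swapEquiv τ K).symm (MvPolynomial.C f) = f.map MvPolynomial.C := by
  have h : (swapEquiv τ K).symm.toRingHom.comp MvPolynomial.C = mapRingHom MvPolynomial.C := by
    ext <;> simp [swapEquiv]
  exact DFunLike.congr_fun h f

attribute [local instance] MvPolynomial.algebraMvPolynomial

theorem exists_det_eq_pow_map_C [IsDomain K] {ι : Type*} [Fintype ι] [DecidableEq ι] {T F : Type*}
    [CommRing T] [CommRing F] [Algebra K[X] F] [IsFractionRing K[X] F]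
    {π : (MvPolynomial τ K)[X] →+* T} {J : Ideal (MvPolynomial τ K)}
    (hπ : RingHom.ker π = J.map C)
    (hJ : LiftsSL ι (J.map (MvPolynomial.map ((algebraMap K[X] F).comp C))))
    {M : Matrix ι ι (MvPolynomial τ K)[X]} (hM : (π.mapMatrix M).det = 1) :
    ∃ (h : K[X]) (P : Matrix ι ι (MvPolynomial τ K)[X]), h ≠ 0 ∧
      P.det = h.map (MvPolynomial.C (σ := τ)) ^ Fintype.card ι ∧
      π.mapMatrix P = π.mapMatrix (h.map (MvPolynomial.C (σ := τ)) • M) := by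
  let e := swapEquiv τ K
  let D := (nonZeroDivisors K[X]).map (MvPolynomial.C (σ := τ))
  have hD : D ≤ nonZeroDivisors _ :=
    map_le_nonZeroDivisors_of_injective _ (MvPolynomial.C_injective _ _) le_rfl
  have hS : LiftsSL ι ((RingHom.ker (π.comp e.symm.toRingHom)).map
      (algebraMap (MvPolynomial τ K[X]) (MvPolynomial τ F))) := by
    have ker_comp : RingHom.ker (π.comp e.symm.toRingHom) = J.map (MvPolynomial.map C) := by
      rw [← RingHom.comap_ker, hπ]
      refine (Ideal.comap_symm e).trans ?_
      exact (Ideal.map_map C e.toRingHom).trans (congrArg (J.map ·) (RingHom.ext swapEquiv_C))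
    rw [ker_comp, Ideal.map_map]
    convert hJ using 2
    ext <;> simp
  have map_e_M : (π.comp e.symm.toRingHom).mapMatrix (e.toRingHom.mapMatrix M) = π.mapMatrix M :=
    Matrix.ext fun i j => congrArg π (e.symm_apply_apply (M i j))
  obtain ⟨_, ⟨h, hh, rfl⟩, P, hP, hPM⟩ := exists_det_eq_pow_of_liftsSL_map hD hS
    (map_e_M.symm ▸ hM)
  refine ⟨h, e.symm.toRingHom.mapMatrix P, nonZeroDivisors.ne_zero hh, ?_, ?_⟩
  · rw [← swapEquiv_symm_C, ← RingHom.map_det, hP]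
    exact map_pow e.symm _ _
  · refine hPM.trans ?_
    ext1 i j
    refine congrArg π ?_
    rw [← swapEquiv_symm_C]
    simp [e]

variable {K : Type*} [Field K]

theorem exists_monic_det_eq_pow {ι : Type*} [Fintype ι] [DecidableEq ι] {T F : Type*} [CommRing T]
    [CommRing F] [Algebra K[X] F] [IsFractionRing K[X] F] {π : (MvPolynomial τ K)[X] →+* T}
    {J : Ideal (MvPolynomial τ K)} (hπ : RingHom.ker π = J.map C)
    (hJ : LiftsSL ι (J.map (MvPolynomial.map ((algebraMap K[X] F).comp C))))
    {M : Matrix ι ι (MvPolynomial τ K)[X]} (hM : (π.mapMatrix M).det = 1) :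
    ∃ (f : (MvPolynomial τ K)[X]) (P : Matrix ι ι (MvPolynomial τ K)[X]),
      f.Monic ∧ P.det = f ^ Fintype.card ι ∧ π.mapMatrix P = π.mapMatrix (f • M) := by
  obtain ⟨h, P, hh, hP, hPM⟩ := exists_det_eq_pow_map_C hπ hJ hM
  let c : (MvPolynomial τ K)[X] := C (MvPolynomial.C h.leadingCoeff⁻¹)
  have hc : (h * C h.leadingCoeff⁻¹).map MvPolynomial.C = c * h.map MvPolynomial.C := by
    rw [Polynomial.map_mul, map_C, mul_comm]
  refine ⟨c * h.map MvPolynomial.C, c • P, ?_, ?_, ?_⟩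
  · exact hc ▸ (monic_mul_leadingCoeff_inv hh).map _
  · rw [det_smul, hP, mul_pow]
  · rw [mul_smul]
    ext1 i j
    simpa using congrArg (π c * ·) (congr_fun₂ hPM i j)

theorem LiftsSL.map_polynomial_C {ι : Type*} [Fintype ι] [DecidableEq ι] (F : Type*) [CommRing F]
    [Algebra K[X] F] [IsFractionRing K[X] F] {J : Ideal (MvPolynomial τ K)} (hJ : LiftsSL ι J)
    (hJF : LiftsSL ι (J.map (MvPolynomial.map ((algebraMap K[X] F).comp C)))) :
    LiftsSL ι (J.map (C : _ →+* (MvPolynomial τ K)[X])) :=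
  hJ.polynomial fun _ => exists_monic_det_eq_pow (by rw [ker_mapRingHom, Ideal.mk_ker]) hJF

end Polynomial

section FirstVariable

/-- The ring isomorphism `K[x₁, …, xₙ₊₂] ≃ K[x₁, …, xₙ₊₁][X]` sending the last variable to `X`,
for induction on the number of variables. -/
noncomputable def lastVarEquiv (n : ℕ) (K : Type*) [CommRing K] :
    MvPolynomial (Fin (n + 2)) K ≃+* (MvPolynomial (Fin (n + 1)) K)[X] :=
  ((MvPolynomial.renameEquiv K finSuccEquivLast).trans
    (MvPolynomial.optionEquivLeft K (Fin (n + 1)))).toRingEquiv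

theorem lastVarEquiv_symm_C_toMvPolynomial (n : ℕ) {K : Type*} [CommRing K] (f : K[X]) :
    (lastVarEquiv n K).symm (C (f.toMvPolynomial 0)) = f.toMvPolynomial 0 := by
  have h : ((lastVarEquiv n K).symm.toRingHom.comp C).comp (Polynomial.toMvPolynomial 0).toRingHom =
      (Polynomial.toMvPolynomial 0).toRingHom := by
    ext <;> simp [lastVarEquiv]
  exact DFunLike.congr_fun h f

theorem map_toMvPolynomial {σ R S : Type*} [CommRing R] [CommRing S] (g : R →+* S) (i : σ)
    (f : R[X]) : MvPolynomial.map g (f.toMvPolynomial i) = (f.map g).toMvPolynomial i := by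
  have h : (MvPolynomial.map g).comp (Polynomial.toMvPolynomial i).toRingHom =
      (Polynomial.toMvPolynomial i).toRingHom.comp (mapRingHom g) := by
    ext <;> simp
  exact DFunLike.congr_fun h f

theorem liftsSL_map_toMvPolynomial {K : Type*} [Field K] (n : ℕ) (I : Ideal K[X]) :
    LiftsSL (Fin 2) (I.map (Polynomial.toMvPolynomial (0 : Fin (n + 1))).toRingHom) := by
  induction n generalizing K with
  | zero =>
    let e := (MvPolynomial.uniqueAlgEquiv K (Fin 1)).symm
    have : IsBezout (MvPolynomial (Fin 1) K) := e.surjective.isBezout e.toRingHom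
    exact liftsSL_of_isBezout _
  | succ n ih =>
    let F := FractionRing K[X]
    let J := I.map (Polynomial.toMvPolynomial (0 : Fin (n + 1))).toRingHom
    have hJF : LiftsSL (Fin 2) (J.map (MvPolynomial.map ((algebraMap K[X] F).comp C))) := by
      convert ih (I.map (mapRingHom ((algebraMap K[X] F).comp C))) using 1
      rw [Ideal.map_map, Ideal.map_map]
      exact congrArg (I.map ·) (RingHom.ext fun f => map_toMvPolynomial _ _ f)
    convert ((ih I).map_polynomial_C F hJF).map_ringEquiv (lastVarEquiv n K).symm using 1
    rw [Ideal.map_map]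
    exact ((Ideal.map_map _ (lastVarEquiv n K).symm.toRingHom).trans
      (congrArg (I.map ·) (RingHom.ext (lastVarEquiv_symm_C_toMvPolynomial n)))).symm

/-- The ring isomorphism `K[x₁, …, xₙ₊₁] ≃ K[x₁][x₂, …, xₙ₊₁]`, through which `piBar` becomes
reduction of the coefficients. -/
noncomputable def firstVarEquiv (n : ℕ) (K : Type*) [CommRing K] :
    MvPolynomial (Fin (n + 1)) K ≃+* MvPolynomial (Fin n) K[X] :=
  ((MvPolynomial.renameEquiv K (_root_.finSuccEquiv n)).trans
    (MvPolynomial.optionEquivRight K (Fin n))).toRingEquiv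

theorem firstVarEquiv_symm_C (n : ℕ) {K : Type*} [CommRing K] (f : K[X]) :
    (firstVarEquiv n K).symm (MvPolynomial.C f) = f.toMvPolynomial 0 := by
  have h : (firstVarEquiv n K).symm.toRingHom.comp MvPolynomial.C =
      (Polynomial.toMvPolynomial 0).toRingHom := by
    ext <;> simp [firstVarEquiv]
  exact DFunLike.congr_fun h f

variable {K : Type*} [Field K]

theorem piBar_eq (n : ℕ) (p : K[X]) :
    piBar n p = (MvPolynomial.map (Ideal.Quotient.mk (Ideal.span {p}))).comp
      (firstVarEquiv n K).toRingHom := by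
  refine MvPolynomial.ringHom_ext (fun a => ?_) (Fin.cases ?_ fun j => ?_)
  · have h : algebraMap K (K[X] ⧸ Ideal.span {p}) a = Ideal.Quotient.mk _ (C a) := rfl
    simp [piBar, firstVarEquiv, h]
  · simp [piBar, firstVarEquiv]
  · simp [piBar, firstVarEquiv]

theorem piBar_surjective (n : ℕ) (p : K[X]) : Function.Surjective (piBar n p) := by
  rw [piBar_eq]
  exact (MvPolynomial.map_surjective _ Ideal.Quotient.mk_surjective).comp
    (firstVarEquiv n K).surjective

theorem ker_piBar (n : ℕ) (p : K[X]) : RingHom.ker (piBar n p) =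
    (Ideal.span {p}).map (Polynomial.toMvPolynomial (0 : Fin (n + 1))).toRingHom := by
  rw [piBar_eq, ← RingHom.comap_ker, MvPolynomial.ker_map, Ideal.mk_ker]
  refine (Ideal.map_symm (firstVarEquiv n K)).symm.trans ?_
  exact (Ideal.map_map MvPolynomial.C (firstVarEquiv n K).symm.toRingHom).trans
    (congrArg (Ideal.map · _) (RingHom.ext (firstVarEquiv_symm_C n)))

theorem piBar_eq_zero_iff (n : ℕ) (p : K[X]) (a : MvPolynomial (Fin (n + 1)) K) :
    piBar n p a = 0 ↔ polyImage n p ∣ a := by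
  rw [← RingHom.mem_ker, ker_piBar, Ideal.map_span, Set.image_singleton,
    Ideal.mem_span_singleton]
  rfl

theorem surjective_map_piBar (n : ℕ) (p : K[X]) :
    Function.Surjective (SpecialLinearGroup.map (n := Fin 2) (R := MvPolynomial (Fin (n + 1)) K)
      (S := MvPolynomial (Fin n) (K[X] ⧸ Ideal.span {p})) (piBar n p)) := by
  rw [← liftsSL_ker_iff (piBar_surjective n p), ker_piBar]
  exact liftsSL_map_toMvPolynomial n _

end FirstVariable

section RankOne

variable {R : Type*} [CommRing R]

theorem mem_minorsSet_one {l m : ℕ} {F : Matrix (Fin l) (Fin m) R} {a : R} :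
    a ∈ minorsSet 1 F ↔ ∃ i j, a = F i j := by
  constructor
  · rintro ⟨f, g, -, -, rfl⟩
    exact ⟨f 0, g 0, det_fin_one _⟩
  · rintro ⟨i, j, rfl⟩
    exact ⟨fun _ => i, fun _ => j, Subsingleton.strictMono _, Subsingleton.strictMono _,
      by simp⟩

theorem exists_eq_smul_of_span_reduced_minors_eq_top [IsDomain R] {l m : ℕ}
    {F : Matrix (Fin l) (Fin m) R} (hF : F ≠ 0) {d : R} (hd : ∀ a ∈ minorsSet 1 F, d ∣ a)
    (hspan : Ideal.span {b | d * b ∈ minorsSet 1 F} = ⊤) :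
    ∃ B : Matrix (Fin l) (Fin m) R, d ≠ 0 ∧ F = d • B ∧
      Ideal.span (Set.range fun k : Fin l × Fin m => B k.1 k.2) = ⊤ := by
  choose B hB using fun i j => hd (F i j) (mem_minorsSet_one.2 ⟨i, j, rfl⟩)
  have hFB : F = d • of B := Matrix.ext hB
  have hd₀ : d ≠ 0 := by
    rintro rfl
    exact hF (by rw [hFB, zero_smul])
  refine ⟨of B, hd₀, hFB, top_le_iff.1 (hspan ▸ Ideal.span_mono fun b hb => ?_)⟩
  obtain ⟨i, j, hij⟩ := mem_minorsSet_one.1 hb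
  rw [hB] at hij
  exact ⟨(i, j), (mul_left_cancel₀ hd₀ hij).symm⟩

theorem exists_eq_vecMulVec_of_det_eq_zero [IsDomain R] [DecompositionMonoid R]
    {B : Matrix (Fin 2) (Fin 2) R} (hB : B.det = 0) : ∃ u v, B = vecMulVec u v := by
  rw [det_fin_two, sub_eq_zero] at hB
  simp only [← Matrix.ext_iff, vecMulVec_apply, Fin.forall_fin_two]
  by_cases h₀ : B 0 0 = 0
  · rw [h₀, zero_mul] at hB
    rcases mul_eq_zero.1 hB.symm with h₁ | h₁
    · exact ⟨![0, 1], B 1, by simp [h₀, h₁]⟩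
    · exact ⟨fun i => B i 1, ![0, 1], by simp [h₀, h₁]⟩
  · obtain ⟨g, h, ⟨y, hy⟩, ⟨z, hz⟩, hgh⟩ := exists_dvd_and_dvd_of_dvd_mul ⟨B 1 1, hB.symm⟩
    have h₁₁ : B 1 1 = z * y := by
      apply mul_left_cancel₀ h₀
      rw [hB, hgh, hy, hz]
      ring
    exact ⟨![g, z], ![h, y], by simp [hgh, hy, hz, h₁₁, mul_comm]⟩

theorem isCoprime_of_span_vecMulVec_eq_top {m : Type*} {u : Fin 2 → R} {v : m → R}
    (h : Ideal.span (Set.range fun k : Fin 2 × m => vecMulVec u v k.1 k.2) = ⊤) :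
    IsCoprime (u 0) (u 1) := by
  rw [← Ideal.isCoprime_span_singleton_iff, Ideal.isCoprime_iff_sup_eq, ← Ideal.span_union,
    ← top_le_iff, ← h, Ideal.span_le]
  rintro _ ⟨⟨i, j⟩, rfl⟩
  refine Ideal.mul_mem_right _ _ (Ideal.subset_span ?_)
  fin_cases i <;> simp

theorem exists_SL2_mul_vecMulVec_row_one_eq_zero {m : Type*} {u : Fin 2 → R} (v : m → R)
    (hu : IsCoprime (u 0) (u 1)) :
    ∃ W : SpecialLinearGroup (Fin 2) R, (W.1 * vecMulVec u v) 1 = 0 := by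
  obtain ⟨W, hW₀, hW₁⟩ := hu.symm.neg_left.exists_SL2_row 1
  refine ⟨W, funext fun j => ?_⟩
  rw [mul_vecMulVec, vecMulVec_apply, mulVec_eq_sum, Fin.sum_univ_two]
  simp [hW₀, hW₁, mul_comm]

theorem exists_SL2_mul_row_one_eq_zero [IsDomain R] [DecompositionMonoid R]
    {F : Matrix (Fin 2) (Fin 2) R} (hF : F.rank = 1) {d : R} (hd : ∀ a ∈ minorsSet 1 F, d ∣ a)
    (hspan : Ideal.span {b | d * b ∈ minorsSet 1 F} = ⊤) :
    ∃ W : SpecialLinearGroup (Fin 2) R, (W.1 * F) 1 = 0 := by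
  have F_ne_zero : F ≠ 0 := by
    rintro rfl
    simp at hF
  have det_F : F.det = 0 := by
    by_contra h
    simp [rank_of_det_ne_zero h] at hF
  obtain ⟨B, hd₀, rfl, hB⟩ := exists_eq_smul_of_span_reduced_minors_eq_top F_ne_zero hd hspan
  rw [det_smul, mul_eq_zero_iff_left (pow_ne_zero _ hd₀)] at det_F
  obtain ⟨u, v, rfl⟩ := exists_eq_vecMulVec_of_det_eq_zero det_F
  obtain ⟨W, hW⟩ :=
    exists_SL2_mul_vecMulVec_row_one_eq_zero v (isCoprime_of_span_vecMulVec_eq_top hB)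
  refine ⟨W, ?_⟩
  rw [Matrix.mul_smul]
  exact (congrArg (d • ·) hW).trans (smul_zero d)

theorem exists_eq_diagonal_mul {M : Matrix (Fin 2) (Fin 2) R} {p : R} (hM : ∀ j, p ∣ M 1 j) :
    ∃ G, M = diagonal ![1, p] * G := by
  choose g hg using hM
  refine ⟨of ![M 0, g], Matrix.ext fun i j => ?_⟩
  rw [diagonal_mul]
  fin_cases i
  · exact (one_mul _).symm
  · exact hg j

theorem exists_SL2_mul_eq_diagonal_mul {S : Type*} [CommRing S] [IsDomain S]
    [DecompositionMonoid S] {π : R →+* S}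
    (hπ : Function.Surjective (SpecialLinearGroup.map (n := Fin 2) π)) {p : R}
    (hp : ∀ a, π a = 0 → p ∣ a) {F : Matrix (Fin 2) (Fin 2) R} (hF : (F.map π).rank = 1) {d : S}
    (hd : ∀ a ∈ minorsSet 1 (F.map π), d ∣ a)
    (hspan : Ideal.span {b | d * b ∈ minorsSet 1 (F.map π)} = ⊤) :
    ∃ (U : SpecialLinearGroup (Fin 2) R) (G : Matrix (Fin 2) (Fin 2) R),
      U.1 * F = diagonal ![1, p] * G := by
  obtain ⟨W, hW⟩ := exists_SL2_mul_row_one_eq_zero hF hd hspan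
  obtain ⟨U, rfl⟩ := hπ W
  refine ⟨U, exists_eq_diagonal_mul fun j => hp _ ?_⟩
  have map_mul : (U.1 * F).map π = U.1.map π * F.map π := Matrix.map_mul
  exact (congr_fun₂ map_mul 1 j).trans (congr_fun hW j)

end RankOne

end

/-- let `F ∈ A^{2×2}` with `p ∈ K[x₁]` irreducible.  If `rank F̄ = 1`
and the `1 × 1` reduced minors of `F̄` generate the unit ideal of `Ā`
(`J₁(F̄) = Ā`), then there is `U ∈ GL₂(A)` with `U·F = diag(1, p)·G`
for some `G ∈ A^{2×2}`. -/
theorem stmt6 {K : Type*} [Field K] {n : ℕ} (p : Polynomial K) (hp : Irreducible p)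
    (F : Matrix (Fin 2) (Fin 2) (MvPolynomial (Fin (n + 1)) K))
    (hrank : (F.map (piBar n p)).rank = 1)
    (hJ : ∃ d, IsGcdOf d (minorsSet 1 (F.map (piBar n p))) ∧
      Ideal.span {b | d * b ∈ minorsSet 1 (F.map (piBar n p))} = ⊤) :
    ∃ (U G : Matrix (Fin 2) (Fin 2) (MvPolynomial (Fin (n + 1)) K)),
      IsUnit U.det ∧ U * F = Matrix.diagonal ![1, polyImage n p] * G := by
  obtain ⟨d, ⟨hd, -⟩, hspan⟩ := hJ
  have := PrincipalIdealRing.isMaximal_of_irreducible hp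
  have : DecompositionMonoid (MvPolynomial (Fin n) (Polynomial K ⧸ Ideal.span {p})) := by
    let := Ideal.Quotient.field (Ideal.span {p})
    infer_instance
  obtain ⟨U, G, hUG⟩ := exists_SL2_mul_eq_diagonal_mul (R := MvPolynomial (Fin (n + 1)) K)
    (S := MvPolynomial (Fin n) (Polynomial K ⧸ Ideal.span {p})) (surjective_map_piBar n p)
    (fun a => (piBar_eq_zero_iff n p a).1) hrank hd hspan
  exact ⟨U, G, by simp, hUG⟩
end
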